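/- arXiv:2312.16447 — 2 statements merged into one kernel-verified Lean document; each statement's English description precedes it below -/
import Mathlib

section
/- Let τ(n) be the number of spanning trees in the connected Cayley graph D_n = Cay(D_n, b^{±β_1},...,b^{±β_s}, ab^{γ_1},...,ab^{γ_t}), and let δ be the square-free part of ξ = (2β_odd + γ_odd)(2β_odd + γ_even). Then there exists an integer sequence a(n) such that τ(n) = n·t·a(n)² when n is odd, and τ(n) = n·t·δ·a(n)² when n is even. -/
open DihedralGroup

/-- The Cayley graph of a group with symmetric connection set `S`. -/
def cayleyGraph {G : Type*} [Group G] (S : Set G) : SimpleGraph G :=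
  SimpleGraph.fromRel (fun x y => x⁻¹ * y ∈ S)

/-- The generating set `{b^{±β_1},…,b^{±β_s}, a b^{γ_1},…, a b^{γ_t}}` of `D_n`,
where `b = r 1` and `a = sr 0`. -/
def dihedralGenSet (n : ℕ) {s t : ℕ} (β : Fin s → ℕ) (γ : Fin t → ℕ) :
    Set (DihedralGroup n) :=
  (Set.range fun i => r (β i : ZMod n)) ∪ (Set.range fun i => r (-(β i : ZMod n))) ∪
    (Set.range fun j => sr (γ j : ZMod n))

/-- The number of spanning trees of a graph. -/
noncomputable def numSpanningTrees {V : Type*} (G : SimpleGraph V) : ℕ :=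
  Nat.card {H : G.Subgraph // H.IsSpanning ∧ H.coe.IsTree}

/-!
By the matrix tree theorem, `det (L + J) = N ^ 2 * τ` for a graph on `N` vertices with Laplacian
matrix `L` and all-one matrix `J`. Under the Fourier transform of the dihedral group,
`L + J` splits into 2 × 2 blocks indexed by the `n`-th roots of unity `z`. The block of `z = 1` has
determinant `4 * n * t`, and that of any other `z` is `(1 - z) * (1 - z⁻¹) * R (z + z⁻¹)` for an
integer polynomial `R`. As the product of `1 - z` over `z ≠ 1` is `n`, this yields
`τ = n * t * ∏ R (z + z⁻¹)`. The factors of `z` and `z⁻¹` coincide, and the product over one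
representative of each pair `z ≠ z⁻¹` is an integer, being the resultant of `R` with a monic integer
polynomial built from Chebyshev polynomials. For even `n` the root `z = -1` is left over, and it
contributes `R (-2) = (2 * βodd + γodd) * (2 * βodd + γeven)`.
-/
section ParentMaps

variable {V : Type*} {root : V} {f g : V → V}

/-- Iterating `f` from any vertex eventually hits `root`: following `f` as a parent map
never runs into a cycle that avoids the root. -/
def ReachesRoot (root : V) (f : V → V) : Prop :=
  ∀ v, ∃ k, f^[k] v = root

namespace ReachesRoot

open Classical in
/-- The number of steps `f` needs to reach the root. -/
noncomputable def depth (h : ReachesRoot root f) (v : V) : ℕ :=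
  Nat.find (h v)

lemma depth_eq_depth_apply_add_one (h : ReachesRoot root f) {v : V} (hv : v ≠ root) :
    h.depth v = h.depth (f v) + 1 := by
  classical
  exact Nat.find_comp_succ (h v) (h (f v)) hv

lemma ne_root_of_depth_ne_zero (h : ReachesRoot root f) {v : V} (hv : h.depth v ≠ 0) :
    v ≠ root := by
  classical
  rintro rfl
  exact hv ((Nat.find_eq_zero _).2 rfl)

end ReachesRoot

/-- `f` is the parent map of a spanning tree of `G` rooted at `root`: the root is its own parent,
and every other vertex is adjacent to its parent. -/
structure IsParentMap (G : SimpleGraph V) (root : V) (f : V → V) : Prop where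
  map_root : f root = root
  adj : ∀ v, v ≠ root → G.Adj v (f v)
  reachesRoot : ReachesRoot root f

/-- The graph whose edges join each non-root vertex to its parent. -/
def parentGraph (root : V) (f : V → V) : SimpleGraph V :=
  SimpleGraph.fromRel fun v w => v ≠ root ∧ w = f v

lemma eq_or_eq_of_parentGraph_adj {v w : V} (h : (parentGraph root f).Adj v w) :
    v ≠ root ∧ w = f v ∨ w ≠ root ∧ v = f w :=
  ((SimpleGraph.fromRel_adj _ _ _).1 h).2

lemma parentGraph_edgeSet_subset :
    (parentGraph root f).edgeSet ⊆ (fun v => s(v, f v)) '' {root}ᶜ := by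
  refine Sym2.ind fun v w he => ?_
  rcases eq_or_eq_of_parentGraph_adj (v := v) (w := w) he with ⟨hv, rfl⟩ | ⟨hw, rfl⟩
  · exact ⟨v, hv, rfl⟩
  · exact ⟨w, hw, Sym2.eq_swap⟩

namespace ReachesRoot

lemma parentGraph_adj (h : ReachesRoot root f) {v : V} (hv : v ≠ root) :
    (parentGraph root f).Adj v (f v) := by
  refine (SimpleGraph.fromRel_adj _ _ _).2 ⟨fun hfix => ?_, Or.inl ⟨hv, rfl⟩⟩
  have hdepth := h.depth_eq_depth_apply_add_one hv
  rw [← hfix] at hdepth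
  omega

lemma parentGraph_reachable_root (h : ReachesRoot root f) (v : V) :
    (parentGraph root f).Reachable v root := by
  obtain ⟨k, hk⟩ := h v
  induction k generalizing v with
  | zero => exact hk ▸ .refl _
  | succ k ih =>
    by_cases hv : v = root
    · exact hv ▸ .refl _
    · exact (h.parentGraph_adj hv).reachable.trans (ih (f v) hk)

lemma parentGraph_connected (h : ReachesRoot root f) : (parentGraph root f).Connected :=
  SimpleGraph.connected_iff_exists_forall_reachable _ |>.2
    ⟨root, fun v => (h.parentGraph_reachable_root v).symm⟩

lemma parentGraph_isTree [Finite V] (h : ReachesRoot root f) : (parentGraph root f).IsTree := by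
  refine SimpleGraph.isTree_iff_connected_and_card.2 ⟨h.parentGraph_connected,
    le_antisymm ?_ h.parentGraph_connected.card_vert_le_card_edgeSet_add_one⟩
  have hedges : (parentGraph root f).edgeSet.ncard ≤ ({root}ᶜ : Set V).ncard :=
    (Set.ncard_le_ncard parentGraph_edgeSet_subset).trans (Set.ncard_image_le (Set.toFinite _))
  have hvertices := Set.ncard_add_ncard_compl {root}
  rw [Set.ncard_singleton] at hvertices
  rw [Nat.card_coe_set_eq]
  omega

lemma depth_le_depth_of_parentGraph_eq (hf : ReachesRoot root f) (hg : ReachesRoot root g)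
    (h : parentGraph root f = parentGraph root g) (v : V) : hf.depth v ≤ hg.depth v := by
  induction hd : hg.depth v generalizing v with
  | zero =>
    by_contra! hpos
    have hv := hf.ne_root_of_depth_ne_zero hpos.ne'
    have := hg.depth_eq_depth_apply_add_one hv
    omega
  | succ d ih =>
    have hv := hg.ne_root_of_depth_ne_zero (v := v) (by omega)
    have hgv := hg.depth_eq_depth_apply_add_one hv
    have hstep := ih (g v) (by omega)
    rcases eq_or_eq_of_parentGraph_adj (h ▸ hg.parentGraph_adj hv) with
      ⟨_, hparent⟩ | ⟨hgv', hchild⟩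
    · have := hf.depth_eq_depth_apply_add_one hv
      rw [← hparent] at this
      omega
    · have := hf.depth_eq_depth_apply_add_one hgv'
      rw [← hchild] at this
      omega

end ReachesRoot

namespace IsParentMap

variable {G : SimpleGraph V}

lemma parentGraph_le (h : IsParentMap G root f) : parentGraph root f ≤ G := by
  intro v w hvw
  rcases eq_or_eq_of_parentGraph_adj hvw with ⟨hv, rfl⟩ | ⟨hw, rfl⟩
  · exact h.adj v hv
  · exact (h.adj w hw).symm

lemma parentGraph_eq_of_isTree (h : IsParentMap G root f) (hG : G.IsTree) :
    parentGraph root f = G :=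
  h.parentGraph_le.antisymm <|
    (SimpleGraph.isTree_iff_minimal_connected.1 hG).2 h.reachesRoot.parentGraph_connected
      h.parentGraph_le

-- The depth functions agree, so the parent of `v` is its unique neighbour of smaller depth.
lemma eq_of_parentGraph_eq (hf : IsParentMap G root f) (hg : IsParentMap G root g)
    (h : parentGraph root f = parentGraph root g) : f = g := by
  have hdepth : ∀ v, hf.reachesRoot.depth v = hg.reachesRoot.depth v := fun v =>
    (hf.reachesRoot.depth_le_depth_of_parentGraph_eq hg.reachesRoot h v).antisymm
      (hg.reachesRoot.depth_le_depth_of_parentGraph_eq hf.reachesRoot h.symm v)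
  ext v
  by_cases hv : v = root
  · rw [hv, hf.map_root, hg.map_root]
  rcases eq_or_eq_of_parentGraph_adj (h ▸ hg.reachesRoot.parentGraph_adj hv) with
    ⟨_, hparent⟩ | ⟨hgv, hchild⟩
  · exact hparent.symm
  · have hup := hg.reachesRoot.depth_eq_depth_apply_add_one hv
    have hdown := hf.reachesRoot.depth_eq_depth_apply_add_one hgv
    rw [← hchild, hdepth, hdepth] at hdown
    omega

end IsParentMap

lemma exists_adj_dist_lt {G : SimpleGraph V} (hG : G.Connected) {v : V} (hv : v ≠ root) :
    ∃ u, G.Adj v u ∧ G.dist u root < G.dist v root := by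
  obtain ⟨p, hp⟩ := hG.exists_walk_length_eq_dist v root
  cases p with
  | nil => exact absurd rfl hv
  | cons hadj q =>
    refine ⟨_, hadj, ?_⟩
    have := SimpleGraph.dist_le q
    rw [SimpleGraph.Walk.length_cons] at hp
    omega

lemma exists_isParentMap {G : SimpleGraph V} (hG : G.Connected) (root : V) :
    ∃ f, IsParentMap G root f := by
  classical
  choose! parent hadj hlt using fun v (hv : v ≠ root) => exists_adj_dist_lt hG hv
  refine ⟨Function.update parent root root, by simp, fun v hv => by simpa [hv] using hadj v hv,
    fun v => ?_⟩
  induction hd : G.dist v root using Nat.strong_induction_on generalizing v with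
  | _ d ih =>
    by_cases hv : v = root
    · exact ⟨0, hv⟩
    · obtain ⟨k, hk⟩ := ih _ (hd ▸ hlt v hv) (parent v) rfl
      exact ⟨k + 1, by simpa [hv] using hk⟩

lemma numSpanningTrees_eq_card_isTree (G : SimpleGraph V) :
    numSpanningTrees G = Nat.card {H : SimpleGraph V // H ≤ G ∧ H.IsTree} := by
  refine Nat.card_congr
    { toFun H := ⟨H.1.spanningCoe, H.1.spanningCoe_le,
        (H.1.spanningCoeEquivCoeOfSpanning H.2.1).isTree_iff.2 H.2.2⟩
      invFun H := ⟨SimpleGraph.toSubgraph H.1 H.2.1, fun _ => trivial,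
        ((SimpleGraph.toSubgraph H.1 H.2.1).spanningCoeEquivCoeOfSpanning
          fun _ => trivial).isTree_iff.1 H.2.2⟩
      left_inv H := ?_
      right_inv _ := rfl }
  ext v w
  · simp [H.2.1 v]
  · rfl

lemma numSpanningTrees_eq_zero_of_not_connected {G : SimpleGraph V} (hG : ¬ G.Connected) :
    numSpanningTrees G = 0 := by
  rw [numSpanningTrees_eq_card_isTree]
  have : IsEmpty {H : SimpleGraph V // H ≤ G ∧ H.IsTree} :=
    ⟨fun H => hG (H.2.2.connected.mono H.2.1)⟩
  exact Nat.card_of_isEmpty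

lemma numSpanningTrees_eq_card_isParentMap [Finite V] (G : SimpleGraph V) (root : V) :
    numSpanningTrees G = Nat.card {f // IsParentMap G root f} := by
  rw [numSpanningTrees_eq_card_isTree]
  symm
  refine Nat.card_congr (Equiv.ofBijective (fun f => ⟨parentGraph root f.1,
    f.2.parentGraph_le, f.2.reachesRoot.parentGraph_isTree⟩) ⟨fun f g h => ?_, fun H => ?_⟩)
  · exact Subtype.ext (f.2.eq_of_parentGraph_eq g.2 (congrArg Subtype.val h))
  · obtain ⟨f, hf⟩ := exists_isParentMap H.2.2.connected root
    exact ⟨⟨f, hf.map_root, fun v hv => H.2.1 (hf.adj v hv), hf.reachesRoot⟩,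
      Subtype.ext (hf.parentGraph_eq_of_isTree H.2.2)⟩

end ParentMaps

section MatrixTree

open Finset Matrix

variable {V : Type*} [Fintype V] [DecidableEq V]

/-- The row of the Laplacian of `parentGraph root f` at `v`, seen as a function of the parent `u`
of `v`; at the root it is replaced by the unit vector. -/
def parentRow (root v u : V) : V → ℤ :=
  if v = root then Pi.single root 1 else Pi.single v 1 - Pi.single u 1

variable {root : V} {f : V → V}

lemma det_parentRow_of_reachesRoot (h : ReachesRoot root f) :
    (of fun v => parentRow root v (f v)).det = 1 := by
  have hzero : ∀ v w, v ≠ w → h.depth v ≤ h.depth w → parentRow root v (f v) w = 0 := by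
    intro v w hvw hle
    rcases eq_or_ne v root with rfl | hv
    · simp [parentRow, hvw.symm]
    · have hdepth := h.depth_eq_depth_apply_add_one hv
      have hfv : w ≠ f v := by rintro rfl; omega
      simp [parentRow, hv, hvw.symm, hfv]
  have hone : ∀ v, parentRow root v (f v) v = 1 := by
    intro v
    rcases eq_or_ne v root with rfl | hv
    · simp [parentRow]
    · simp [parentRow, hv, (h.parentGraph_adj hv).ne]
  have htriangular : (of fun v => parentRow root v (f v)).BlockTriangular
      (fun v => OrderDual.toDual (h.depth v)) := fun v w (hlt : h.depth v < h.depth w) =>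
    hzero v w (by rintro rfl; omega) hlt.le
  rw [htriangular.det]
  refine prod_eq_one fun d _ => ?_
  suffices (of fun v => parentRow root v (f v)).toSquareBlock
      (fun v => OrderDual.toDual (h.depth v)) d = 1 by rw [this, det_one]
  ext ⟨v, hv⟩ ⟨w, hw⟩
  rw [toSquareBlock_def, of_apply, of_apply, one_apply]
  split_ifs with hvw
  · obtain rfl : v = w := congrArg Subtype.val hvw
    exact hone v
  · exact hzero v w (fun h => hvw (Subtype.ext h))
      (OrderDual.toDual.injective (hv.trans hw.symm)).le

-- The indicator of the vertices that never reach the root lies in the kernel.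
lemma det_parentRow_of_not_reachesRoot (h : ¬ ReachesRoot root f) :
    (of fun v => parentRow root v (f v)).det = 0 := by
  classical
  obtain ⟨v, hv⟩ := not_forall.1 h
  let lost : V → Prop := fun u => ¬ ∃ k, f^[k] u = root
  have hstep : ∀ u, u ≠ root → (lost u ↔ lost (f u)) := by
    refine fun u hu => not_congr ⟨fun ⟨k, hk⟩ => ?_, fun ⟨k, hk⟩ => ⟨k + 1, hk⟩⟩
    cases k with
    | zero => exact absurd hk hu
    | succ k => exact ⟨k, hk⟩
  have hroot : ¬ lost root := not_not.2 ⟨0, rfl⟩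
  refine exists_mulVec_eq_zero_iff.1 ⟨fun u => if lost u then 1 else 0,
    fun hx => by simpa [lost, hv] using congrFun hx v, funext fun u => ?_⟩
  rcases eq_or_ne u root with rfl | hu
  · simp [mulVec, parentRow, hroot]
  · simp only [mulVec, of_apply, parentRow, if_neg hu]
    rw [sub_dotProduct, single_dotProduct, single_dotProduct]
    simp only [hstep u hu, sub_self, Pi.zero_apply]

variable (G : SimpleGraph V) [DecidableRel G.Adj]

lemma lapMatrix_updateRow_single_eq_sum_parentRow (root : V) :
    (G.lapMatrix ℤ).updateRow root (Pi.single root 1) = of fun v =>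
      ∑ u ∈ if v = root then {root} else G.neighborFinset v, parentRow root v u := by
  ext v w
  rcases eq_or_ne v root with rfl | hv
  · simp [parentRow]
  · rcases eq_or_ne v w with rfl | hvw
    · simp [parentRow, hv, SimpleGraph.lapMatrix, SimpleGraph.degMatrix, Pi.single_apply]
    · simp [parentRow, hv, hvw, hvw.symm, SimpleGraph.lapMatrix, SimpleGraph.degMatrix,
        Pi.single_apply, SimpleGraph.adjMatrix_apply]

-- Multilinearity in the rows splits the determinant into one summand per choice of parents.
theorem det_lapMatrix_updateRow_single (root : V) :
    ((G.lapMatrix ℤ).updateRow root (Pi.single root 1)).det = numSpanningTrees G := by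
  classical
  let parents : V → Finset V := fun v => if v = root then {root} else G.neighborFinset v
  have hdet : ∀ f : V → V, (of fun v => parentRow root v (f v)).det =
      if ReachesRoot root f then 1 else 0 := fun f => by
    split_ifs with h
    · exact det_parentRow_of_reachesRoot h
    · exact det_parentRow_of_not_reachesRoot h
  have hparents : ∀ f : V → V, f ∈ Fintype.piFinset parents ∧ ReachesRoot root f ↔
      IsParentMap G root f := by
    intro f
    rw [Fintype.mem_piFinset]
    refine ⟨fun ⟨hmem, h⟩ => ⟨by simpa [parents] using hmem root,
      fun v hv => by simpa [parents, hv] using hmem v, h⟩, fun h => ⟨fun v => ?_, h.reachesRoot⟩⟩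
    rcases eq_or_ne v root with rfl | hv
    · simp [parents, h.map_root]
    · simpa [parents, hv] using h.adj v hv
  calc ((G.lapMatrix ℤ).updateRow root (Pi.single root 1)).det
      = ∑ f ∈ Fintype.piFinset parents, (of fun v => parentRow root v (f v)).det := by
        rw [lapMatrix_updateRow_single_eq_sum_parentRow]
        exact (detRowAlternating (R := ℤ) (n := V)).toMultilinearMap.map_sum_finset
          (parentRow root) parents
    _ = #{f ∈ Fintype.piFinset parents | ReachesRoot root f} := by
        simp only [hdet, sum_boole]
    _ = numSpanningTrees G := by
        rw [numSpanningTrees_eq_card_isParentMap G root, Nat.card_eq_fintype_card,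
          Fintype.card_subtype]
        congr 2
        ext f
        rw [mem_filter, hparents, mem_filter_univ]

section ZeroLineSums

variable {R : Type*} [CommRing R] {L : Matrix V V R}

lemma det_add_one_eq_card_mul_det_updateRow (hcol : ∀ w, ∑ v, L v w = 0) (i : V) :
    (L + of fun _ _ => 1).det = Fintype.card V * (L.updateRow i fun _ => 1).det := by
  set M := L + of fun _ _ => 1 with hM
  have hsum : ∑ v, (1 : R) • M v = (Fintype.card V : R) • fun _ => 1 := by
    ext w
    have hentry : ∀ v, ((1 : R) • M v) w = L v w + 1 := by simp [hM]
    rw [Finset.sum_apply, sum_congr rfl fun v _ => hentry v, sum_add_distrib, hcol]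
    simp
  have hrow := det_updateRow_sum M i fun _ => 1
  rw [hsum, det_updateRow_smul, one_smul] at hrow
  rw [← hrow]
  congr 1
  refine det_eq_of_forall_row_eq_smul_add_const (fun v => if v = i then 0 else 1) i (by simp)
    fun v w => ?_
  rcases eq_or_ne v i with rfl | hv <;> simp [*, updateRow_ne]

lemma det_updateRow_one_eq_card_mul [IsDomain R] (hrow : ∀ v, ∑ w, L v w = 0) (i : V) :
    (L.updateRow i fun _ => 1).det = Fintype.card V * (L.updateRow i (Pi.single i 1)).det := by
  have hsingular : (L.updateRow i
      ((fun _ => 1) + (-(Fintype.card V : R)) • Pi.single i 1)).det = 0 := by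
    refine exists_mulVec_eq_zero_iff.1 ⟨fun _ => 1,
      fun h => one_ne_zero (congrFun h i), funext fun v => ?_⟩
    rcases eq_or_ne v i with rfl | hv
    · simp [mulVec, dotProduct, sum_add_distrib, Pi.single_apply]
    · simp [mulVec, dotProduct, updateRow_ne hv, hrow]
  rw [det_updateRow_add, det_updateRow_smul] at hsingular
  linear_combination hsingular

end ZeroLineSums

theorem det_lapMatrix_add_one [Nonempty V] :
    (G.lapMatrix ℤ + of fun _ _ => 1).det = (Fintype.card V : ℤ) ^ 2 * numSpanningTrees G := by
  obtain ⟨root⟩ := ‹Nonempty V›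
  have hrow : ∀ v, ∑ w, G.lapMatrix ℤ v w = 0 := fun v => by
    simpa [mulVec, dotProduct] using congrFun (G.lapMatrix_mulVec_const_eq_zero (R := ℤ)) v
  have hcol : ∀ w, ∑ v, G.lapMatrix ℤ v w = 0 := fun w => by
    simpa only [(G.isSymm_lapMatrix (R := ℤ)).apply] using hrow w
  rw [det_add_one_eq_card_mul_det_updateRow hcol root, det_updateRow_one_eq_card_mul hrow root,
    det_lapMatrix_updateRow_single]
  ring

end MatrixTree

section SymmetricPolynomials

open Finset Polynomial

section Chebyshev

variable {A : Type*} [CommRing A] {x y : A}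

lemma chebyshevC_eval_add (h : x * y = 1) (a b : ℕ) :
    (Chebyshev.C A (a - b)).eval (x + y) = x ^ a * y ^ b + x ^ b * y ^ a := by
  wlog hba : b ≤ a generalizing a b
  · rw [← neg_sub, Chebyshev.C_neg, this b a (not_le.1 hba).le, add_comm]
  obtain ⟨c, rfl⟩ := Nat.exists_eq_add_of_le hba
  have hb : x ^ b * y ^ b = 1 := by rw [← mul_pow, h, one_pow]
  rw [Nat.cast_add, add_sub_cancel_left, ← dickson_one_one_eq_chebyshev_C,
    dickson_one_one_eval_add_inv x y h, pow_add, pow_add]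
  linear_combination -(x ^ c + y ^ c) * hb

lemma sub_mul_chebyshevS_eval_add (h : x * y = 1) (m : ℕ) :
    (x - y) * (Chebyshev.S A (m - 1)).eval (x + y) = x ^ m - y ^ m := by
  induction m using Nat.twoStepInduction with
  | zero => simp
  | one => simp
  | more m ih₀ ih₁ =>
    have hrec : Chebyshev.S A ((m + 2 : ℕ) - 1) =
        X * Chebyshev.S A ((m + 1 : ℕ) - 1) - Chebyshev.S A (m - 1) := by
      rw [Chebyshev.S_eq]
      push_cast
      ring_nf
    rw [hrec, eval_sub, eval_mul, eval_X]
    linear_combination (x + y) * ih₁ - ih₀ + (x ^ m - y ^ m) * h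

lemma isMonicOfDegree_chebyshevS [Nontrivial A] (k : ℕ) : IsMonicOfDegree (Chebyshev.S A k) k := by
  induction k using Nat.twoStepInduction with
  | zero => simp
  | one => simpa using isMonicOfDegree_X A
  | more k ih₀ ih₁ =>
    rw [Nat.cast_add, Nat.cast_two, Chebyshev.S_add_two, add_comm k 2, ← one_add_one_eq_two,
      add_assoc, add_comm 1 k]
    refine ((isMonicOfDegree_X A).mul (by exact_mod_cast ih₁)).sub ?_
    rw [ih₀.natDegree_eq]
    omega

lemma isMonicOfDegree_chebyshevS_add_chebyshevS [Nontrivial A] (k : ℕ) :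
    IsMonicOfDegree (Chebyshev.S A k + Chebyshev.S A (k - 1)) k := by
  cases k with
  | zero => simp
  | succ k =>
    refine (isMonicOfDegree_chebyshevS (k + 1)).add_right ?_
    rw [Nat.cast_succ, add_sub_cancel_right, (isMonicOfDegree_chebyshevS k).natDegree_eq]
    omega

end Chebyshev

variable {s t : ℕ} (β : Fin s → ℕ) (γ : Fin t → ℕ)

section Symbol

variable {A : Type*} [CommRing A]

/-- The determinant of the Laplacian of the dihedral Cayley graph on the two-dimensional
representation in which `b` acts with eigenvalues `x` and `y`; here `x * y = 1` is intended. -/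
def dihedralSymbol (x y : A) : A :=
  (2 * s + t - ∑ i, (x ^ β i + y ^ β i)) ^ 2 - (∑ j, x ^ γ j) * ∑ j, y ^ γ j

/-- The integer polynomial in `x + y` that expresses `dihedralSymbol β γ x y` when `x * y = 1`. -/
noncomputable def symbolPolynomial : ℤ[X] :=
  (2 * s + t - ∑ i, Chebyshev.C ℤ (β i)) ^ 2 -
    (t + ∑ j, ∑ k ∈ Ioi j, Chebyshev.C ℤ (γ j - γ k))

/-- The quotient of `symbolPolynomial β γ` by `2 - X`, which takes the value `(1 - x) * (1 - y)`
at `x + y` when `x * y = 1`. -/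
noncomputable def symbolQuotient : ℤ[X] :=
  -(symbolPolynomial β γ /ₘ (X - C 2))

lemma sum_pow_mul_sum_pow {x y : A} (h : x * y = 1) :
    (∑ j, x ^ γ j) * ∑ j, y ^ γ j =
      t + ∑ j, ∑ k ∈ Ioi j, (Chebyshev.C A (γ j - γ k)).eval (x + y) := by
  have hdiag : ∀ j, x ^ γ j * y ^ γ j = 1 := fun j => by rw [← mul_pow, h, one_pow]
  simp only [chebyshevC_eval_add h]
  calc (∑ j, x ^ γ j) * ∑ j, y ^ γ j
      = ∑ j, (x ^ γ j * y ^ γ j + ∑ k ∈ {j}ᶜ, x ^ γ k * y ^ γ j) := by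
        rw [sum_mul_sum, sum_comm]
        exact sum_congr rfl fun j _ => Fintype.sum_eq_add_sum_compl j _
    _ = t + ∑ j, ∑ k ∈ Ioi j, (x ^ γ j * y ^ γ k + x ^ γ k * y ^ γ j) := by
        rw [sum_add_distrib, ← sum_sum_Ioi_add_eq_sum_sum_off_diag fun k j => x ^ γ k * y ^ γ j]
        simp [hdiag, add_comm]

lemma aeval_symbolPolynomial {x y : A} (h : x * y = 1) :
    aeval (x + y) (symbolPolynomial β γ) = dihedralSymbol β γ x y := by
  have hβ : ∀ i, x ^ β i + y ^ β i = (Chebyshev.C A (β i)).eval (x + y) := fun i => by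
    simpa using (chebyshevC_eval_add h (β i) 0).symm
  simp only [symbolPolynomial, dihedralSymbol, sum_pow_mul_sum_pow γ h, hβ, map_sub, map_add,
    map_mul, map_pow, map_sum, map_natCast, map_ofNat, Chebyshev.aeval_C]

lemma dihedralSymbol_one_one : dihedralSymbol β γ (1 : A) 1 = 0 := by
  simp only [dihedralSymbol, one_pow, sum_const, card_univ, Fintype.card_fin, nsmul_eq_mul]
  ring

end Symbol

lemma symbolPolynomial_eq_mul_symbolQuotient :
    symbolPolynomial β γ = (2 - X) * symbolQuotient β γ := by
  have hroot : (symbolPolynomial β γ).IsRoot 2 := by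
    simpa [dihedralSymbol_one_one] using aeval_symbolPolynomial β γ (mul_one (1 : ℤ))
  rw [symbolQuotient, mul_neg, ← neg_mul, neg_sub]
  exact (mul_divByMonic_eq_iff_isRoot.2 hroot).symm

lemma dihedralSymbol_eq_mul_aeval_symbolQuotient {A : Type*} [CommRing A] {x y : A}
    (h : x * y = 1) :
    dihedralSymbol β γ x y = (1 - x) * (1 - y) * aeval (x + y) (symbolQuotient β γ) := by
  rw [← aeval_symbolPolynomial β γ h, symbolPolynomial_eq_mul_symbolQuotient, map_mul, map_sub,
    aeval_X, map_ofNat]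
  linear_combination -aeval (x + y) (symbolQuotient β γ) * h

section Parity

variable {ι : Type*} [Fintype ι] (e : ι → ℕ)

lemma sum_neg_one_pow_eq_card_sub_card :
    ∑ i, (-1 : ℤ) ^ e i = #{i | Even (e i)} - #{i | Odd (e i)} := by
  simp only [card_filter, Nat.cast_sum, ← sum_sub_distrib]
  refine sum_congr rfl fun i _ => ?_
  rcases Nat.even_or_odd (e i) with h | h
  · simp [h, Nat.not_odd_iff_even.2 h]
  · simp [h, Nat.not_even_iff_odd.2 h]

lemma card_even_add_card_odd : #{i | Even (e i)} + #{i | Odd (e i)} = Fintype.card ι := by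
  simpa using card_filter_add_card_filter_not (s := univ) fun i => Even (e i)

end Parity

lemma dihedralSymbol_neg_one_neg_one :
    dihedralSymbol β γ (-1 : ℤ) (-1) =
      4 * ((2 * #{i | Odd (β i)} + #{j | Odd (γ j)}) *
        (2 * #{i | Odd (β i)} + #{j | Even (γ j)})) := by
  have hs : (s : ℤ) = _ := congrArg Nat.cast (by simpa using (card_even_add_card_odd β).symm)
  have ht : (t : ℤ) = _ := congrArg Nat.cast (by simpa using (card_even_add_card_odd γ).symm)
  rw [dihedralSymbol, sum_add_distrib, sum_neg_one_pow_eq_card_sub_card,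
    sum_neg_one_pow_eq_card_sub_card, hs, ht]
  push_cast
  ring

lemma symbolQuotient_eval_neg_two :
    (symbolQuotient β γ).eval (-2) =
      (2 * #{i | Odd (β i)} + #{j | Odd (γ j)}) * (2 * #{i | Odd (β i)} + #{j | Even (γ j)}) := by
  have h := dihedralSymbol_eq_mul_aeval_symbolQuotient β γ (neg_mul_neg (1 : ℤ) 1)
  rw [dihedralSymbol_neg_one_neg_one] at h
  norm_num [aeval_def] at h
  linarith

end SymmetricPolynomials

section RootsOfUnity

open Finset Polynomial

-- The product is the resultant of `W` and `R`, hence a polynomial in their coefficients.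
lemma exists_algebraMap_eq_prod_aeval {A K : Type*} [CommRing A] [Field K] [Algebra A K]
    {W : A[X]} (hW : W.Monic) {S : Finset K} (hroot : ∀ x ∈ S, aeval x W = 0)
    (hcard : W.natDegree = #S) (R : A[X]) :
    ∃ c : A, algebraMap A K c = ∏ x ∈ S, aeval x R := by
  have hmonic : (W.map (algebraMap A K)).Monic := hW.map _
  have hdegree : (W.map (algebraMap A K)).natDegree = W.natDegree := hW.natDegree_map _
  have hroots : (W.map (algebraMap A K)).roots = S.val :=
    roots_eq_of_natDegree_le_card_of_ne_zero
      (fun x hx => by rw [eval_map_algebraMap, hroot x hx]) (hdegree.trans hcard).le hmonic.ne_zero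
  have hsplits : (W.map (algebraMap A K)).Splits := by
    rw [splits_iff_card_roots, hroots, hdegree, hcard, card_val]
  have hresultant := resultant_eq_prod_eval _ (R.map (algebraMap A K)) R.natDegree
    natDegree_map_le hsplits
  rw [hdegree, resultant_map_map, hmonic.leadingCoeff, one_pow, one_mul, hroots] at hresultant
  refine ⟨_, hresultant.trans ?_⟩
  simp only [eval_map_algebraMap, Finset.prod]

variable {K : Type*} [Field K]

lemma eq_or_mul_eq_one_of_add_inv_eq {z w : K} (hz : z ≠ 0) (hw : w ≠ 0)
    (h : z + z⁻¹ = w + w⁻¹) : z = w ∨ z * w = 1 := by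
  have hfactor : (z - w) * (z * w - 1) = 0 := by
    field_simp at h
    linear_combination h
  exact (mul_eq_zero.1 hfactor).imp sub_eq_zero.1 sub_eq_zero.1

section ChebyshevRoots

variable {z : K} {k : ℕ}

lemma sub_inv_ne_zero_of_sq_ne_one (hz : z ≠ 0) (hsq : z ^ 2 ≠ 1) : z - z⁻¹ ≠ 0 := by
  refine fun h => hsq ?_
  rw [sq]
  nth_rewrite 2 [sub_eq_zero.1 h]
  exact mul_inv_cancel₀ hz

lemma pow_eq_inv_pow_of_pow_add_eq_one {a b : ℕ} (h : z ^ (a + b) = 1) : z ^ a = z⁻¹ ^ b := by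
  rw [inv_pow]
  exact eq_inv_of_mul_eq_one_left (by rw [← pow_add, h])

lemma chebyshevS_add_chebyshevS_eval_add_inv (hz : z ^ (2 * k + 1) = 1) (hsq : z ^ 2 ≠ 1) :
    (Chebyshev.S K k + Chebyshev.S K (k - 1)).eval (z + z⁻¹) = 0 := by
  have hz0 : z ≠ 0 := by rintro rfl; simp at hz
  refine (mul_eq_zero.1 ?_).resolve_left (sub_inv_ne_zero_of_sq_ne_one hz0 hsq)
  have hk := sub_mul_chebyshevS_eval_add (mul_inv_cancel₀ hz0) k
  have hk' := sub_mul_chebyshevS_eval_add (mul_inv_cancel₀ hz0) (k + 1)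
  rw [Nat.cast_succ, add_sub_cancel_right,
    pow_eq_inv_pow_of_pow_add_eq_one (b := k) (by rw [← hz]; ring)] at hk'
  rw [pow_eq_inv_pow_of_pow_add_eq_one (b := k + 1) (by rw [← hz]; ring)] at hk
  rw [eval_add]
  linear_combination hk + hk'

lemma chebyshevS_eval_add_inv (hz : z ^ (2 * k + 2) = 1) (hsq : z ^ 2 ≠ 1) :
    (Chebyshev.S K k).eval (z + z⁻¹) = 0 := by
  have hz0 : z ≠ 0 := by rintro rfl; simp at hz
  refine (mul_eq_zero.1 ?_).resolve_left (sub_inv_ne_zero_of_sq_ne_one hz0 hsq)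
  have hk := sub_mul_chebyshevS_eval_add (mul_inv_cancel₀ hz0) (k + 1)
  rwa [Nat.cast_succ, add_sub_cancel_right,
    pow_eq_inv_pow_of_pow_add_eq_one (b := k + 1) (by rw [← hz]; ring), sub_self] at hk

end ChebyshevRoots

section HalfProduct

variable {A : Type*} [CommRing A] [Algebra A K] {n k : ℕ} {ζ : K}

lemma exists_algebraMap_eq_prod_aeval_pow_add_inv (hζ : IsPrimitiveRoot ζ n) (hk : 2 * k < n)
    {W : A[X]} (hW : IsMonicOfDegree W k)
    (hroot : ∀ z : K, z ^ n = 1 → z ^ 2 ≠ 1 → aeval (z + z⁻¹) W = 0) (R : A[X]) :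
    ∃ c : A, algebraMap A K c = ∏ j ∈ range k, aeval (ζ ^ (j + 1) + (ζ ^ (j + 1))⁻¹) R := by
  classical
  have hζ0 : ζ ≠ 0 := hζ.ne_zero (by omega)
  have hinj : Set.InjOn (fun j => ζ ^ (j + 1) + (ζ ^ (j + 1))⁻¹) (range k) := by
    intro i hi j hj h
    rw [coe_range, Set.mem_Iio] at hi hj
    rcases eq_or_mul_eq_one_of_add_inv_eq (pow_ne_zero _ hζ0) (pow_ne_zero _ hζ0) h with h | h
    · exact Nat.succ_injective (hζ.pow_inj (by omega) (by omega) h)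
    · rw [← pow_add] at h
      exact absurd h (hζ.pow_ne_one_of_pos_of_lt (by omega) (by omega))
  rw [← prod_image (f := fun x => aeval x R) hinj]
  refine exists_algebraMap_eq_prod_aeval hW.monic (fun x hx => ?_)
    (by rw [hW.natDegree_eq, card_image_of_injOn hinj, card_range]) R
  obtain ⟨j, hj, rfl⟩ := mem_image.1 hx
  rw [mem_range] at hj
  refine hroot _ (by rw [pow_right_comm, hζ.pow_eq_one, one_pow]) ?_
  rw [← pow_mul]
  exact hζ.pow_ne_one_of_pos_of_lt (by omega) (by omega)

lemma prod_range_eq_mul_sq_of_reflect {M : Type*} [CommMonoid M] (k e : ℕ) (g : ℕ → M)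
    (hg : ∀ j < k, g (k + e + (k - 1 - j)) = g j) :
    ∏ j ∈ range (k + e + k), g j = (∏ j ∈ range e, g (k + j)) * (∏ j ∈ range k, g j) ^ 2 := by
  rw [prod_range_add, prod_range_add, ← prod_range_reflect (fun j => g (k + e + j)),
    prod_congr rfl fun j hj => hg j (mem_range.1 hj), sq]
  exact mul_right_comm _ _ _ |>.trans (mul_comm _ _)

lemma aeval_pow_add_inv_eq_of_add_eq (hζ : ζ ^ n = 1) {a b : ℕ} (hab : a + b = n) (R : A[X]) :
    aeval (ζ ^ a + (ζ ^ a)⁻¹) R = aeval (ζ ^ b + (ζ ^ b)⁻¹) R := by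
  have hinv : ζ ^ a = (ζ ^ b)⁻¹ := eq_inv_of_mul_eq_one_left (by rw [← pow_add, hab, hζ])
  rw [hinv, inv_inv, add_comm]

lemma exists_algebraMap_sq_eq_prod_of_odd (hζ : IsPrimitiveRoot ζ n) (hn : Odd n) (R : A[X]) :
    ∃ c : A, algebraMap A K (c ^ 2) =
      ∏ j ∈ range (n - 1), aeval (ζ ^ (j + 1) + (ζ ^ (j + 1))⁻¹) R := by
  have : Nontrivial A := (algebraMap A K).domain_nontrivial
  obtain ⟨k, rfl⟩ := hn
  obtain ⟨c, hc⟩ := exists_algebraMap_eq_prod_aeval_pow_add_inv hζ (by omega)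
    (isMonicOfDegree_chebyshevS_add_chebyshevS k) (fun z hz hsq => by
      rw [map_add, Chebyshev.aeval_S, Chebyshev.aeval_S, ← eval_add,
        chebyshevS_add_chebyshevS_eval_add_inv hz hsq]) R
  refine ⟨c, ?_⟩
  rw [show 2 * k + 1 - 1 = k + 0 + k by omega, prod_range_eq_mul_sq_of_reflect k 0 _ fun j hj =>
    aeval_pow_add_inv_eq_of_add_eq hζ.pow_eq_one (by omega) R, map_pow, hc, prod_range_zero,
    one_mul]

lemma exists_algebraMap_eval_mul_sq_eq_prod_of_even (hζ : IsPrimitiveRoot ζ n) (hn : Even n)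
    (hn0 : n ≠ 0) (R : A[X]) :
    ∃ c : A, algebraMap A K (R.eval (-2) * c ^ 2) =
      ∏ j ∈ range (n - 1), aeval (ζ ^ (j + 1) + (ζ ^ (j + 1))⁻¹) R := by
  have : Nontrivial A := (algebraMap A K).domain_nontrivial
  obtain ⟨k, rfl⟩ : ∃ k, n = 2 * k + 2 := ⟨n / 2 - 1, by grind⟩
  obtain ⟨c, hc⟩ := exists_algebraMap_eq_prod_aeval_pow_add_inv hζ (by omega)
    (isMonicOfDegree_chebyshevS k) (fun z hz hsq => by
      rw [Chebyshev.aeval_S, chebyshevS_eval_add_inv hz hsq]) R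
  have hhalf : ζ ^ (k + 1) = -1 :=
    (hζ.pow (by omega) (by ring : 2 * k + 2 = (k + 1) * 2)).eq_neg_one_of_two_right
  have hmiddle : aeval (ζ ^ (k + 1) + (ζ ^ (k + 1))⁻¹) R = algebraMap A K (R.eval (-2)) := by
    rw [hhalf, ← aeval_algebraMap_apply_eq_algebraMap_eval, map_neg, map_ofNat, inv_neg, inv_one]
    norm_num
  refine ⟨c, ?_⟩
  rw [show 2 * k + 2 - 1 = k + 1 + k by omega, prod_range_eq_mul_sq_of_reflect k 1 _ fun j hj =>
    aeval_pow_add_inv_eq_of_add_eq hζ.pow_eq_one (by omega) R, map_mul, map_pow, hc,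
    prod_range_one, add_zero, hmiddle]

end HalfProduct

lemma prod_one_sub_pow_mul_one_sub_inv_pow {n : ℕ} {ζ : K} (hζ : IsPrimitiveRoot ζ n)
    (hn : n ≠ 0) :
    ∏ j ∈ range (n - 1), (1 - ζ ^ (j + 1)) * (1 - (ζ ^ (j + 1))⁻¹) = (n : K) ^ 2 := by
  obtain ⟨m, rfl⟩ := Nat.exists_eq_succ_of_ne_zero hn
  simp only [← inv_pow]
  rw [prod_mul_distrib, Nat.succ_sub_one, hζ.prod_one_sub_pow_eq_order,
    hζ.inv.prod_one_sub_pow_eq_order, Nat.cast_succ, sq]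

lemma prod_dihedralSymbol {s t n : ℕ} (β : Fin s → ℕ) (γ : Fin t → ℕ) {ζ : K}
    (hζ : IsPrimitiveRoot ζ n) (hn : n ≠ 0) :
    ∏ j ∈ range (n - 1), dihedralSymbol β γ (ζ ^ (j + 1)) (ζ ^ (j + 1))⁻¹ =
      (n : K) ^ 2 * ∏ j ∈ range (n - 1),
        aeval (ζ ^ (j + 1) + (ζ ^ (j + 1))⁻¹) (symbolQuotient β γ) := by
  rw [← prod_one_sub_pow_mul_one_sub_inv_pow hζ hn, ← prod_mul_distrib]
  exact prod_congr rfl fun j _ => dihedralSymbol_eq_mul_aeval_symbolQuotient β γ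
    (mul_inv_cancel₀ (pow_ne_zero _ (hζ.ne_zero hn)))

end RootsOfUnity

section DihedralFourier

open Finset Matrix ZMod
open scoped Kronecker

variable {n : ℕ} [NeZero n]

variable (n) in
/-- The matrix of the discrete Fourier transform on `ZMod n`. -/
noncomputable def dftMatrix : Matrix (ZMod n) (ZMod n) ℂ :=
  of fun j k => stdAddChar (j * k)

lemma sum_stdAddChar_mul (j : ZMod n) :
    ∑ i : ZMod n, stdAddChar (j * i) = if j = 0 then (n : ℂ) else 0 := by
  have h := AddChar.sum_mulShift j (isPrimitive_stdAddChar n)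
  rw [ZMod.card, Nat.cast_ite, Nat.cast_zero] at h
  simpa only [mul_comm] using h

lemma dftMatrix_mul_conj :
    dftMatrix n * (of fun j k => stdAddChar (-(j * k))) = (n : ℂ) • 1 := by
  ext j k
  have hterm : ∀ i : ZMod n, stdAddChar (j * i) * stdAddChar (-(i * k)) =
      (stdAddChar ((j - k) * i) : ℂ) := fun i => by
    rw [← AddChar.map_add_eq_mul]
    congr 1
    ring
  simp only [mul_apply, dftMatrix, of_apply, hterm, sum_stdAddChar_mul, sub_eq_zero,
    Matrix.smul_apply, one_apply, smul_eq_mul, mul_ite, mul_one, mul_zero]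

lemma det_dftMatrix_ne_zero : (dftMatrix n).det ≠ 0 := by
  intro h
  have hdet := congrArg det (dftMatrix_mul_conj (n := n))
  rw [det_mul, h, zero_mul, det_smul, det_one, mul_one] at hdet
  exact pow_ne_zero _ (Nat.cast_ne_zero.2 (NeZero.ne n)) hdet.symm

theorem det_blockCirculant {κ : Type*} [Fintype κ] [DecidableEq κ] (g : κ → κ → ZMod n → ℂ) :
    (of fun x y : κ × ZMod n => g x.1 y.1 (x.2 - y.2)).det =
      ∏ j : ZMod n, (of fun a b => ∑ i, stdAddChar (j * i) * g a b i).det := by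
  let D : ZMod n → Matrix κ κ ℂ := fun j => of fun a b => ∑ i, stdAddChar (j * i) * g a b i
  have hintertwine : ((1 : Matrix κ κ ℂ) ⊗ₖ dftMatrix n) *
      (of fun x y : κ × ZMod n => g x.1 y.1 (x.2 - y.2)) =
      blockDiagonal D * ((1 : Matrix κ κ ℂ) ⊗ₖ dftMatrix n) := by
    ext ⟨a, j⟩ ⟨b, k⟩
    simp only [mul_apply, Fintype.sum_prod_type, kroneckerMap_apply, one_apply,
      blockDiagonal_apply, dftMatrix, D, of_apply, ite_mul, mul_ite, zero_mul, mul_zero, one_mul]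
    simp only [sum_ite_irrel, sum_const_zero, sum_ite_eq, sum_ite_eq', mem_univ, if_true, sum_mul]
    refine Fintype.sum_equiv (Equiv.subRight k) _ _ fun i => ?_
    rw [Equiv.subRight_apply, show j * i = j * (i - k) + j * k by ring, AddChar.map_add_eq_mul]
    ring
  have hF : ((1 : Matrix κ κ ℂ) ⊗ₖ dftMatrix n).det ≠ 0 := by
    rw [det_kronecker, det_one, one_pow, one_mul]
    exact pow_ne_zero _ det_dftMatrix_ne_zero
  have hdet := congrArg det hintertwine
  rw [det_mul, det_mul, det_blockDiagonal, mul_comm] at hdet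
  exact mul_right_cancel₀ hF hdet

variable (n) in
/-- The identification of `DihedralGroup n` with two copies of `ZMod n`. The sign on reflections
makes every group matrix `h (x⁻¹ * y)` depend on differences only. -/
def dihedralEquiv : Fin 2 × ZMod n ≃ DihedralGroup n where
  toFun x := if x.1 = 0 then r x.2 else sr (-x.2)
  invFun
    | r i => (0, i)
    | sr i => (1, -i)
  left_inv := by
    rintro ⟨a, i⟩
    fin_cases a <;> simp
  right_inv := by
    rintro (i | i) <;> simp

lemma sum_stdAddChar_mul_comp_neg (f : ZMod n → ℂ) (j : ZMod n) :
    ∑ i, stdAddChar (j * i) * f (-i) = ∑ i, stdAddChar (-j * i) * f i :=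
  Fintype.sum_equiv (Equiv.neg _) _ _ fun i => by simp

theorem det_dihedralGroupMatrix (h : DihedralGroup n → ℂ) :
    (of fun x y => h (x⁻¹ * y)).det = ∏ j : ZMod n,
      ((∑ i, stdAddChar (j * i) * h (r i)) * (∑ i, stdAddChar (-j * i) * h (r i)) -
        (∑ i, stdAddChar (j * i) * h (sr i)) * ∑ i, stdAddChar (-j * i) * h (sr i)) := by
  let g : Fin 2 → Fin 2 → ZMod n → ℂ := fun a b d =>
    if a = 0 then (if b = 0 then h (r (-d)) else h (sr d))
    else (if b = 0 then h (sr (-d)) else h (r d))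
  have hcirculant : (of fun x y => h (x⁻¹ * y)).submatrix (dihedralEquiv n) (dihedralEquiv n) =
      of fun x y => g x.1 y.1 (x.2 - y.2) := by
    ext ⟨a, i⟩ ⟨b, k⟩
    simp only [submatrix_apply, of_apply, dihedralEquiv, Equiv.coe_fn_mk, g]
    fin_cases a <;> fin_cases b <;> simp <;> ring_nf
  rw [← det_submatrix_equiv_self (dihedralEquiv n), hcirculant, det_blockCirculant]
  refine prod_congr rfl fun j _ => ?_
  rw [det_fin_two]
  simp only [of_apply, g, if_true, one_ne_zero, if_false]
  rw [sum_stdAddChar_mul_comp_neg fun i => h (r i), sum_stdAddChar_mul_comp_neg fun i => h (sr i)]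
  ring

lemma stdAddChar_mul_natCast (j : ZMod n) (k : ℕ) :
    (stdAddChar (j * (k : ZMod n)) : ℂ) = stdAddChar j ^ k := by
  rw [mul_comm, ← nsmul_eq_mul, AddChar.map_nsmul_eq_pow]

lemma isPrimitiveRoot_stdAddChar_one : IsPrimitiveRoot (stdAddChar (1 : ZMod n) : ℂ) n := by
  have hpow : ∀ k : ℕ, (stdAddChar (1 : ZMod n) : ℂ) ^ k = stdAddChar (k : ZMod n) := fun k => by
    rw [← stdAddChar_mul_natCast, one_mul]
  refine ⟨by rw [hpow, natCast_self, AddChar.map_zero_eq_one], fun l hl => ?_⟩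
  rw [hpow, ← AddChar.map_zero_eq_one (stdAddChar (N := n))] at hl
  exact (natCast_eq_zero_iff _ _).1 (injective_stdAddChar hl)

lemma prod_zmod_eq_mul_prod_range {M : Type*} [CommMonoid M] (f : ZMod n → M) :
    ∏ j, f j = f 0 * ∏ k ∈ range (n - 1), f (k + 1 : ℕ) := by
  obtain ⟨m, rfl⟩ := Nat.exists_eq_succ_of_ne_zero (NeZero.ne n)
  have hrange : ∏ j, f j = ∏ k ∈ range (m + 1), f k :=
    (Fin.prod_univ_eq_prod_range (fun k => f k) (m + 1)).symm ▸
      prod_congr rfl fun j _ => congrArg f (natCast_zmod_val j).symm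
  rw [hrange, prod_range_succ', mul_comm, Nat.cast_zero, Nat.succ_sub_one]

end DihedralFourier

section CayleyGraph

open Finset Matrix

variable {G : Type*} [Group G] {S : Set G}

lemma cayleyGraph_adj_iff (hone : 1 ∉ S) (hinv : ∀ g ∈ S, g⁻¹ ∈ S) {x y : G} :
    (cayleyGraph S).Adj x y ↔ x⁻¹ * y ∈ S := by
  rw [cayleyGraph, SimpleGraph.fromRel_adj]
  refine ⟨fun ⟨_, h⟩ => h.elim id fun h => ?_, fun h => ⟨?_, Or.inl h⟩⟩
  · simpa using hinv _ h
  · rintro rfl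
    exact hone (by simpa using h)

lemma inv_mul_mem_closure_of_cayleyGraph_adj {x y : G} (h : (cayleyGraph S).Adj x y) :
    x⁻¹ * y ∈ Subgroup.closure S := by
  rcases ((SimpleGraph.fromRel_adj _ _ _).1 h).2 with h | h
  · exact Subgroup.subset_closure h
  · simpa using inv_mem (Subgroup.subset_closure h)

lemma closure_eq_top_of_cayleyGraph_connected (h : (cayleyGraph S).Connected) :
    Subgroup.closure S = ⊤ := by
  refine Subgroup.eq_top_iff' _ |>.2 fun g => ?_
  obtain ⟨walk⟩ := h.preconnected 1 g
  suffices ∀ {x y}, (cayleyGraph S).Walk x y → x⁻¹ * y ∈ Subgroup.closure S by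
    simpa using this walk
  intro x y p
  induction p with
  | nil => simp
  | cons hadj _ ih =>
    simpa [mul_assoc] using mul_mem (inv_mul_mem_closure_of_cayleyGraph_adj hadj) ih

lemma cayleyGraph_degree [Fintype G] [DecidableRel (cayleyGraph S).Adj] (hone : 1 ∉ S)
    (hinv : ∀ g ∈ S, g⁻¹ ∈ S) (x : G) : (cayleyGraph S).degree x = S.ncard := by
  have hnbhd : (cayleyGraph S).neighborSet x = (x * ·) '' S := by
    ext y
    simp [cayleyGraph_adj_iff hone hinv]
  rw [← SimpleGraph.card_neighborSet_eq_degree, ← Nat.card_eq_fintype_card, Nat.card_coe_set_eq,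
    hnbhd, Set.ncard_image_of_injective _ (mul_right_injective x)]

variable [DecidableEq G]

/-- The function `h` on the group such that `L + J` has the entries `h (x⁻¹ * y)`, where `L` is the
Laplacian matrix of `cayleyGraph S` and `J` is the all-one matrix. -/
noncomputable def shiftedLaplacianKernel (R : Type*) [Ring R] (S : Set G) (g : G) : R :=
  (if g = 1 then (S.ncard : R) else 0) - S.indicator 1 g + 1

theorem det_shiftedLaplacianKernel [Fintype G] (R : Type*) [CommRing R] (hone : 1 ∉ S)
    (hinv : ∀ g ∈ S, g⁻¹ ∈ S) :
    (of fun x y => shiftedLaplacianKernel R S (x⁻¹ * y)).det =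
      (Fintype.card G : R) ^ 2 * numSpanningTrees (cayleyGraph S) := by
  classical
  have hentries : of (fun x y => shiftedLaplacianKernel R S (x⁻¹ * y)) =
      ((cayleyGraph S).lapMatrix ℤ + of fun _ _ => 1).map (Int.castRingHom R) := by
    ext x y
    simp [shiftedLaplacianKernel, SimpleGraph.lapMatrix, SimpleGraph.degMatrix, diagonal_apply,
      SimpleGraph.adjMatrix_apply, cayleyGraph_degree hone hinv, cayleyGraph_adj_iff hone hinv,
      Set.indicator_apply, inv_mul_eq_one]
  rw [hentries, ← RingHom.mapMatrix_apply, ← RingHom.map_det, det_lapMatrix_add_one]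
  simp

end CayleyGraph

section DihedralGenSet

open Finset ZMod

variable {n s t : ℕ} {β : Fin s → ℕ} {γ : Fin t → ℕ}

lemma inv_mem_dihedralGenSet : ∀ g ∈ dihedralGenSet n β γ, g⁻¹ ∈ dihedralGenSet n β γ := by
  rintro _ ((⟨i, rfl⟩ | ⟨i, rfl⟩) | ⟨j, rfl⟩)
  · exact Or.inl (Or.inr ⟨i, by simp⟩)
  · exact Or.inl (Or.inl ⟨i, by simp⟩)
  · exact Or.inr ⟨j, by simp⟩

lemma r_mem_dihedralGenSet {i : ZMod n} : r i ∈ dihedralGenSet n β γ ↔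
    i ∈ Set.range (Sum.elim (fun k => (β k : ZMod n)) fun k => -(β k : ZMod n)) := by
  simp [dihedralGenSet]

lemma sr_mem_dihedralGenSet {i : ZMod n} :
    sr i ∈ dihedralGenSet n β γ ↔ i ∈ Set.range fun k => (γ k : ZMod n) := by
  simp [dihedralGenSet]

lemma one_notMem_dihedralGenSet (hβpos : ∀ i, 0 < β i) (hβn : ∀ i, 2 * β i < n) :
    1 ∉ dihedralGenSet n β γ := by
  have hβ : ∀ i, (β i : ZMod n) ≠ 0 := fun i h =>
    Nat.not_dvd_of_pos_of_lt (hβpos i) (by linarith [hβn i]) ((natCast_eq_zero_iff _ _).1 h)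
  rw [one_def, r_mem_dihedralGenSet]
  rintro ⟨i | i, hi⟩
  · exact hβ i hi
  · exact hβ i (neg_eq_zero.1 hi)

lemma injective_natCast_zmod {ι : Type*} {e : ι → ℕ} (he : Function.Injective e)
    (hlt : ∀ i, e i < n) : Function.Injective fun i => (e i : ZMod n) := fun i j h =>
  he (((natCast_eq_natCast_iff _ _ _).1 h).eq_of_lt_of_lt (hlt i) (hlt j))

lemma injective_sumElim_natCast_neg_natCast (hβ : Function.Injective β) (hβpos : ∀ i, 0 < β i)
    (hβn : ∀ i, 2 * β i < n) :
    Function.Injective (Sum.elim (fun k => (β k : ZMod n)) fun k => -(β k : ZMod n)) := by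
  have hcast : Function.Injective fun k => (β k : ZMod n) :=
    injective_natCast_zmod hβ fun i => by linarith [hβn i]
  refine hcast.sumElim (neg_injective.comp hcast) fun i j h => ?_
  rw [eq_neg_iff_add_eq_zero, ← Nat.cast_add, natCast_eq_zero_iff] at h
  exact Nat.not_dvd_of_pos_of_lt (by linarith [hβpos i]) (by linarith [hβn i, hβn j]) h

lemma ncard_dihedralGenSet (hβ : Function.Injective β) (hβpos : ∀ i, 0 < β i)
    (hβn : ∀ i, 2 * β i < n) (hγ : Function.Injective γ) (hγn : ∀ j, γ j < n) :
    (dihedralGenSet n β γ).ncard = 2 * s + t := by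
  let e : (Fin s ⊕ Fin s) ⊕ Fin t → DihedralGroup n := Sum.elim
    (r ∘ Sum.elim (fun k => (β k : ZMod n)) fun k => -(β k : ZMod n)) (sr ∘ fun k => (γ k : ZMod n))
  have he : Function.Injective e :=
    .sumElim (.comp (fun _ _ => r.inj) (injective_sumElim_natCast_neg_natCast hβ hβpos hβn))
      (.comp (fun _ _ => sr.inj) (injective_natCast_zmod hγ hγn)) (by simp)
  have hrange : dihedralGenSet n β γ = Set.range e := by
    ext (i | i)
    · simp [r_mem_dihedralGenSet, e]
    · simp [sr_mem_dihedralGenSet, e]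
  rw [hrange, ← Nat.card_coe_set_eq, Nat.card_range_of_injective he]
  simp [two_mul]

section FourierSums

variable [NeZero n]

lemma sum_mul_indicator_r {R : Type*} [Semiring R] (hβ : Function.Injective β)
    (hβpos : ∀ i, 0 < β i) (hβn : ∀ i, 2 * β i < n) (f : ZMod n → R) :
    ∑ i, f i * (dihedralGenSet n β γ).indicator 1 (r i) = ∑ k, (f (β k) + f (-β k)) := by
  rw [sum_add_distrib, ← Fintype.sum_of_injective _
    (injective_sumElim_natCast_neg_natCast hβ hβpos hβn) (f ∘ Sum.elim _ _)]
  · exact Fintype.sum_sum_type _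
  · intro i hi
    rw [Set.indicator_of_notMem (mt r_mem_dihedralGenSet.1 hi), mul_zero]
  · intro k
    rw [Set.indicator_of_mem (r_mem_dihedralGenSet.2 ⟨k, rfl⟩), Pi.one_apply, mul_one,
      Function.comp_apply]

lemma sum_mul_indicator_sr {R : Type*} [Semiring R] (hγ : Function.Injective γ)
    (hγn : ∀ j, γ j < n) (f : ZMod n → R) :
    ∑ i, f i * (dihedralGenSet n β γ).indicator 1 (sr i) = ∑ k, f (γ k) := by
  rw [← Fintype.sum_of_injective _ (injective_natCast_zmod hγ hγn) fun k => f (γ k)]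
  · intro i hi
    rw [Set.indicator_of_notMem (mt sr_mem_dihedralGenSet.1 hi), mul_zero]
  · intro k
    rw [Set.indicator_of_mem (sr_mem_dihedralGenSet.2 ⟨k, rfl⟩), Pi.one_apply, mul_one]

lemma sum_stdAddChar_mul_shiftedLaplacianKernel_r (hβ : Function.Injective β)
    (hβpos : ∀ i, 0 < β i) (hβn : ∀ i, 2 * β i < n) (hγ : Function.Injective γ)
    (hγn : ∀ j, γ j < n) (j : ZMod n) :
    ∑ i, stdAddChar (j * i) * shiftedLaplacianKernel ℂ (dihedralGenSet n β γ) (r i) =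
      2 * s + t - ∑ k, (stdAddChar j ^ β k + (stdAddChar j)⁻¹ ^ β k) +
        if j = 0 then (n : ℂ) else 0 := by
  simp only [shiftedLaplacianKernel, ncard_dihedralGenSet hβ hβpos hβn hγ hγn, one_def, r.injEq,
    mul_add, mul_sub, sum_add_distrib, sum_sub_distrib, mul_one, sum_stdAddChar_mul,
    sum_mul_indicator_r hβ hβpos hβn, mul_neg, AddChar.map_neg_eq_inv, stdAddChar_mul_natCast,
    mul_ite, mul_zero, sum_ite_eq', mem_univ, if_true, AddChar.map_zero_eq_one, one_mul, inv_pow]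
  push_cast
  rfl

lemma sum_stdAddChar_mul_shiftedLaplacianKernel_sr (hγ : Function.Injective γ)
    (hγn : ∀ j, γ j < n) (j : ZMod n) :
    ∑ i, stdAddChar (j * i) * shiftedLaplacianKernel ℂ (dihedralGenSet n β γ) (sr i) =
      -∑ k, stdAddChar j ^ γ k + if j = 0 then (n : ℂ) else 0 := by
  simp only [shiftedLaplacianKernel, one_def, reduceCtorEq, if_false, zero_sub, mul_add, mul_neg,
    sum_add_distrib, sum_neg_distrib, mul_one, sum_stdAddChar_mul, sum_mul_indicator_sr hγ hγn,
    stdAddChar_mul_natCast]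

end FourierSums

end DihedralGenSet

section SpanningTreeCount

open Finset Polynomial ZMod

variable {n s t : ℕ} {β : Fin s → ℕ} {γ : Fin t → ℕ}

lemma dihedralSymbol_eq_sub {A : Type*} [CommRing A] (x y : A) :
    dihedralSymbol β γ x y =
      (2 * s + t - ∑ i, (x ^ β i + y ^ β i)) * (2 * s + t - ∑ i, (y ^ β i + x ^ β i)) -
        (-∑ j, x ^ γ j) * -∑ j, y ^ γ j := by
  simp only [dihedralSymbol, add_comm (y ^ _)]
  ring

lemma det_fourier_shiftedLaplacianKernel [NeZero n] (hβ : Function.Injective β)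
    (hβpos : ∀ i, 0 < β i) (hβn : ∀ i, 2 * β i < n) (hγ : Function.Injective γ)
    (hγn : ∀ j, γ j < n) (j : ZMod n) :
    let h := shiftedLaplacianKernel ℂ (dihedralGenSet n β γ)
    (∑ i, stdAddChar (j * i) * h (r i)) * (∑ i, stdAddChar (-j * i) * h (r i)) -
        (∑ i, stdAddChar (j * i) * h (sr i)) * (∑ i, stdAddChar (-j * i) * h (sr i)) =
      if j = 0 then (4 * n * t : ℂ) else dihedralSymbol β γ (stdAddChar j) (stdAddChar j)⁻¹ := by
  simp only [sum_stdAddChar_mul_shiftedLaplacianKernel_r hβ hβpos hβn hγ hγn,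
    sum_stdAddChar_mul_shiftedLaplacianKernel_sr hγ hγn, AddChar.map_neg_eq_inv, neg_eq_zero,
    inv_inv]
  split_ifs with hj
  · simp only [hj, AddChar.map_zero_eq_one, inv_one, one_pow, sum_const, card_univ,
      Fintype.card_fin, nsmul_eq_mul]
    ring
  · rw [dihedralSymbol_eq_sub]
    simp only [add_zero]

theorem numSpanningTrees_eq_mul_prod [NeZero n] (hβ : Function.Injective β)
    (hβpos : ∀ i, 0 < β i) (hβn : ∀ i, 2 * β i < n) (hγ : Function.Injective γ)
    (hγn : ∀ j, γ j < n) :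
    (numSpanningTrees (cayleyGraph (dihedralGenSet n β γ)) : ℂ) =
      n * t * ∏ k ∈ range (n - 1), aeval ((stdAddChar (1 : ZMod n) : ℂ) ^ (k + 1) +
        (stdAddChar (1 : ZMod n) ^ (k + 1))⁻¹) (symbolQuotient β γ) := by
  set ζ : ℂ := stdAddChar (1 : ZMod n)
  have hn : (n : ℂ) ≠ 0 := Nat.cast_ne_zero.2 (NeZero.ne n)
  have hpow : ∀ k ∈ range (n - 1), (if ((k + 1 : ℕ) : ZMod n) = 0 then (4 * n * t : ℂ) else
      dihedralSymbol β γ (stdAddChar ((k + 1 : ℕ) : ZMod n))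
        (stdAddChar ((k + 1 : ℕ) : ZMod n))⁻¹) =
      dihedralSymbol β γ (ζ ^ (k + 1)) (ζ ^ (k + 1))⁻¹ := fun k hk => by
    rw [mem_range] at hk
    rw [if_neg, ← stdAddChar_mul_natCast, one_mul]
    rw [natCast_eq_zero_iff]
    exact Nat.not_dvd_of_pos_of_lt k.succ_pos (by omega)
  have hdet := det_shiftedLaplacianKernel ℂ
    (one_notMem_dihedralGenSet (γ := γ) hβpos hβn) inv_mem_dihedralGenSet
  rw [det_dihedralGroupMatrix, prod_congr rfl fun j _ =>
      det_fourier_shiftedLaplacianKernel hβ hβpos hβn hγ hγn j, prod_zmod_eq_mul_prod_range,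
    if_pos rfl, prod_congr rfl hpow,
    prod_dihedralSymbol β γ isPrimitiveRoot_stdAddChar_one (NeZero.ne n), DihedralGroup.card,
    Nat.cast_mul, Nat.cast_ofNat] at hdet
  refine mul_left_cancel₀ (pow_ne_zero 2 (mul_ne_zero two_ne_zero hn)) ?_
  linear_combination -hdet

theorem exists_numSpanningTrees_eq_of_odd (hβ : Function.Injective β) (hβpos : ∀ i, 0 < β i)
    (hβn : ∀ i, 2 * β i < n) (hγ : Function.Injective γ) (hγn : ∀ j, γ j < n) (hn : Odd n) :
    ∃ c : ℤ, (numSpanningTrees (cayleyGraph (dihedralGenSet n β γ)) : ℤ) = n * t * c ^ 2 := by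
  have : NeZero n := ⟨hn.pos.ne'⟩
  obtain ⟨c, hc⟩ := exists_algebraMap_sq_eq_prod_of_odd
    (isPrimitiveRoot_stdAddChar_one (n := n)) hn (symbolQuotient β γ)
  refine ⟨c, ?_⟩
  have hcount := numSpanningTrees_eq_mul_prod hβ hβpos hβn hγ hγn
  rw [← hc, eq_intCast] at hcount
  exact_mod_cast hcount

theorem exists_numSpanningTrees_eq_of_even (hβ : Function.Injective β) (hβpos : ∀ i, 0 < β i)
    (hβn : ∀ i, 2 * β i < n) (hγ : Function.Injective γ) (hγn : ∀ j, γ j < n) (hn : Even n)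
    (hn0 : n ≠ 0) :
    ∃ c : ℤ, (numSpanningTrees (cayleyGraph (dihedralGenSet n β γ)) : ℤ) =
      n * t * (((2 * #{i | Odd (β i)} + #{j | Odd (γ j)}) *
        (2 * #{i | Odd (β i)} + #{j | Even (γ j)}) : ℕ) * c ^ 2) := by
  have : NeZero n := ⟨hn0⟩
  obtain ⟨c, hc⟩ := exists_algebraMap_eval_mul_sq_eq_prod_of_even
    (isPrimitiveRoot_stdAddChar_one (n := n)) hn hn0 (symbolQuotient β γ)
  refine ⟨c, ?_⟩
  have hcount := numSpanningTrees_eq_mul_prod hβ hβpos hβn hγ hγn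
  rw [← hc, eq_intCast, symbolQuotient_eval_neg_two] at hcount
  exact_mod_cast hcount

lemma numSpanningTrees_dihedralGenSet_zero (hβn : ∀ i, 2 * β i < 0) (hγ : ∀ j, γ j = 0) :
    numSpanningTrees (cayleyGraph (dihedralGenSet 0 β γ)) = 0 := by
  refine numSpanningTrees_eq_zero_of_not_connected fun hconn => ?_
  have hsub : dihedralGenSet 0 β γ ⊆ {sr 0} := by
    rintro _ ((⟨i, -⟩ | ⟨i, -⟩) | ⟨j, rfl⟩)
    · exact absurd (hβn i) (Nat.not_lt_zero _)
    · exact absurd (hβn i) (Nat.not_lt_zero _)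
    · simp [hγ j]
  have htop : Subgroup.zpowers (sr 0 : DihedralGroup 0) = ⊤ := by
    rw [eq_top_iff, ← closure_eq_top_of_cayleyGraph_connected hconn, Subgroup.zpowers_eq_closure]
    exact Subgroup.closure_mono hsub
  have hcard := Nat.card_zpowers (sr 0 : DihedralGroup 0)
  rw [htop, Subgroup.card_top, DihedralGroup.nat_card, orderOf_sr] at hcard
  exact absurd hcard (by norm_num)

end SpanningTreeCount

theorem stmt17_general (s t : ℕ) (β : Fin s → ℕ) (γ : Fin t → ℕ)
    (hβpos : ∀ i, 0 < β i) (hβ : Function.Injective β) (hγ : Function.Injective γ)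
    (βodd γodd γeven : ℕ)
    (hβodd : βodd = (Finset.univ.filter fun i => Odd (β i)).card)
    (hγodd : γodd = (Finset.univ.filter fun j => Odd (γ j)).card)
    (hγeven : γeven = (Finset.univ.filter fun j => Even (γ j)).card)
    (δ : ℕ) (hξ : ∃ m : ℕ, (2 * βodd + γodd) * (2 * βodd + γeven) = δ * m ^ 2) :
    ∃ a : ℕ → ℤ, ∀ n : ℕ,
      (∀ i, 2 * β i < n) → (∀ j, γ j ≤ n - 1) →
      (Odd n →
        (numSpanningTrees (cayleyGraph (dihedralGenSet n β γ)) : ℤ) =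
          (n : ℤ) * t * (a n) ^ 2) ∧
      (Even n →
        (numSpanningTrees (cayleyGraph (dihedralGenSet n β γ)) : ℤ) =
          (n : ℤ) * t * δ * (a n) ^ 2) := by
  subst hβodd hγodd hγeven
  obtain ⟨m, hm⟩ := hξ
  have hexists : ∀ n : ℕ, (∀ i, 2 * β i < n) → (∀ j, γ j ≤ n - 1) → ∃ c : ℤ,
      (Odd n → (numSpanningTrees (cayleyGraph (dihedralGenSet n β γ)) : ℤ) = n * t * c ^ 2) ∧
      (Even n → (numSpanningTrees (cayleyGraph (dihedralGenSet n β γ)) : ℤ) =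
        n * t * δ * c ^ 2) := by
    intro n hβn hγn
    rcases eq_or_ne n 0 with rfl | hn0
    · simp [numSpanningTrees_dihedralGenSet_zero hβn fun j => Nat.le_zero.1 (hγn j)]
    have hγlt : ∀ j, γ j < n := fun j => Nat.lt_of_le_pred (Nat.pos_of_ne_zero hn0) (hγn j)
    rcases n.even_or_odd with hn | hn
    · obtain ⟨c, hc⟩ := exists_numSpanningTrees_eq_of_even hβ hβpos hβn hγ hγlt hn hn0
      refine ⟨m * c, fun h => absurd hn (Nat.not_even_iff_odd.2 h), fun _ => ?_⟩
      rw [hc, hm]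
      push_cast
      ring
    · obtain ⟨c, hc⟩ := exists_numSpanningTrees_eq_of_odd hβ hβpos hβn hγ hγlt hn
      exact ⟨c, fun _ => hc, fun h => absurd h (Nat.not_even_iff_odd.2 hn)⟩
  choose! a ha using hexists
  exact ⟨a, ha⟩

theorem stmt17 (s t : ℕ) (ht : 0 < t) (β : Fin s → ℕ) (γ : Fin t → ℕ)
    (hβpos : ∀ i, 0 < β i) (hβmono : StrictMono β) (hγmono : StrictMono γ)
    (βodd γodd γeven : ℕ)
    (hβodd : βodd = (Finset.univ.filter fun i => Odd (β i)).card)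
    (hγodd : γodd = (Finset.univ.filter fun j => Odd (γ j)).card)
    (hγeven : γeven = (Finset.univ.filter fun j => Even (γ j)).card)
    (δ : ℕ) (hδ : Squarefree δ)
    (hξ : ∃ m : ℕ, (2 * βodd + γodd) * (2 * βodd + γeven) = δ * m ^ 2) :
    ∃ a : ℕ → ℤ, ∀ n : ℕ,
      (∀ i, 2 * β i < n) → (∀ j, γ j ≤ n - 1) →
      (cayleyGraph (dihedralGenSet n β γ)).Connected →
      (Odd n →
        (numSpanningTrees (cayleyGraph (dihedralGenSet n β γ)) : ℤ) =
          (n : ℤ) * t * (a n) ^ 2) ∧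
      (Even n →
        (numSpanningTrees (cayleyGraph (dihedralGenSet n β γ)) : ℤ) =
          (n : ℤ) * t * δ * (a n) ^ 2) := by
  obtain ⟨a, ha⟩ := stmt17_general s t β γ hβpos hβmono.injective hγmono.injective βodd γodd γeven
    hβodd hγodd hγeven δ hξ
  exact ⟨a, fun n hβn hγn _ => ha n hβn hγn⟩
end

section
/- The number of spanning trees of the prism graph Cay(D_n, b^{±1}, a) is τ(n) = n(T(n, 2) − 1), where T(n, x) is the Chebyshev polynomial of the first kind. -/
open DihedralGroup Polynomial.Chebyshev

/-- The prism graph on `2n` vertices: the Cayley graph `Cay(D_n, {b, b⁻¹, a})`. -/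
def prismGraph (n : ℕ) : SimpleGraph (DihedralGroup n) :=
  cayleyGraph {r 1, r (-1), sr 0}

/-!
Kirchhoff's theorem says that every principal minor of the Laplacian `L` of order `|V| - 1` is the
number of spanning trees `τ`: by Cauchy–Binet it is the sum of the squared determinants of the
reduced incidence matrices of families of `|V| - 1` edges, which are `1` or `0` according to whether
the family connects the graph. The sum of these minors over all vertices is the derivative of a
characteristic polynomial, so for a `k`-regular graph with adjacency matrix `A` it reads
`χ_A'(k) = |V| τ`.

The prism consists of two copies of the `n`-cycle joined by a perfect matching, so `χ_A` splits as
`χ(X - 1) χ(X + 1)`, where `χ` is the characteristic polynomial of `S + Sᵀ` with `S` the cyclic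
shift. From `(q + q⁻¹) - (S + Sᵀ) = q⁻¹ (q - S) (q - S)ᵀ` and `det (q - S) = qⁿ - 1` one gets
`χ = C_n - 2`, where `C_n(q + q⁻¹) = qⁿ + q⁻ⁿ`, that is, `C_n(2x) = 2 T_n(x)`. Since `χ(2) = 0`, the
derivative at `3` is `χ'(2) χ(4) = n² (2 T_n(2) - 2)`.
-/

section Determinants

open Matrix Polynomial

variable {ι κ R : Type*} [Fintype ι] [DecidableEq ι] [CommRing R]

lemma det_mul_eq_sum_prod_mul_det_submatrix [Fintype κ] (A : Matrix ι κ R) (B : Matrix κ ι R) :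
    (A * B).det = ∑ f : ι → κ, (∏ i, A i (f i)) * (B.submatrix f id).det := by
  classical
  have row_mul (i : ι) : (A * B) i = ∑ k, A i k • B k := by
    ext j
    simp [mul_apply]
  calc (A * B).det
      = detRowAlternating fun i => ∑ k, A i k • B k := congrArg _ (funext row_mul)
    _ = ∑ f : ι → κ, detRowAlternating fun i => A i (f i) • B (f i) :=
        (detRowAlternating (R := R) (n := ι)).toMultilinearMap.map_sum _
    _ = _ := Finset.sum_congr rfl fun f _ =>
        (detRowAlternating (R := R) (n := ι)).toMultilinearMap.map_smul_univ _ _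

/-- The **Cauchy–Binet formula**, summed over all families of columns instead of over sets of
columns, so that each set is counted once for every ordering. -/
theorem factorial_mul_det_mul [Fintype κ] (A : Matrix ι κ R) (B : Matrix κ ι R) :
    (Fintype.card ι).factorial * (A * B).det =
      ∑ f : ι → κ, (A.submatrix id f).det * (B.submatrix f id).det := by
  have det_mul_eq_sum_perm (σ : Equiv.Perm ι) : (A * B).det =
      ∑ f : ι → κ, (Equiv.Perm.sign σ * ∏ i, A i (f (σ i))) * (B.submatrix f id).det := by
    rw [det_mul_eq_sum_prod_mul_det_submatrix, ← (σ.symm.arrowCongr (Equiv.refl κ)).sum_comp]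
    refine Finset.sum_congr rfl fun f _ => ?_
    change (∏ i, A i (f (σ i))) * ((B.submatrix f id).submatrix σ id).det = _
    rw [det_permute]
    ring
  calc ((Fintype.card ι).factorial : R) * (A * B).det
      = ∑ _σ : Equiv.Perm ι, (A * B).det := by simp [Fintype.card_perm]
    _ = ∑ σ : Equiv.Perm ι, ∑ f : ι → κ,
          (Equiv.Perm.sign σ * ∏ i, A i (f (σ i))) * (B.submatrix f id).det :=
        Finset.sum_congr rfl fun σ _ => det_mul_eq_sum_perm σ
    _ = ∑ f : ι → κ, (A.submatrix id f).det * (B.submatrix f id).det := by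
        rw [Finset.sum_comm]
        refine Finset.sum_congr rfl fun f _ => ?_
        rw [← Finset.sum_mul, ← det_transpose (A.submatrix id f), det_apply' (A.submatrix id f)ᵀ]
        rfl

/-- The principal submatrix of `M` obtained by deleting the row and the column of index `r`. -/
abbrev deleteRowCol {ι R : Type*} (M : Matrix ι ι R) (r : ι) : Matrix {i // i ≠ r} {i // i ≠ r} R :=
  M.submatrix (↑) (↑)

lemma det_updateCol_single_one (M : Matrix ι ι R) (r : ι) :
    (M.updateCol r (Pi.single r 1)).det = (deleteRowCol M r).det := by
  have : Subsingleton {i // ¬ i ≠ r} := by simpa using Unique.instSubsingleton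
  rw [twoBlockTriangular_det' _ (· ≠ r),
    det_eq_elem_of_subsingleton (toSquareBlockProp _ fun i => ¬ i ≠ r) ⟨r, not_not.2 rfl⟩]
  · suffices toSquareBlockProp (M.updateCol r (Pi.single r 1)) (· ≠ r) = deleteRowCol M r by
      rw [this]
      simp [toSquareBlockProp]
    ext i j
    exact updateCol_ne j.2
  · rintro i hi j hj
    obtain rfl := not_not.1 hj
    simp [hi]

lemma derivative_det (M : Matrix ι ι R[X]) :
    derivative M.det = ∑ j, (M.updateCol j fun i => derivative (M i j)).det := by
  have prod_updateCol (σ : Equiv.Perm ι) (j : ι) :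
      ∏ i, M.updateCol j (fun i => derivative (M i j)) (σ i) i =
        (∏ i ∈ Finset.univ.erase j, M (σ i) i) * derivative (M (σ j) j) := by
    rw [← Finset.prod_erase_mul _ _ (Finset.mem_univ j), updateCol_self]
    congr 1
    exact Finset.prod_congr rfl fun i hi => updateCol_ne (Finset.ne_of_mem_erase hi)
  simp only [det_apply, derivative_sum, derivative_smul, derivative_prod_finset, prod_updateCol,
    Finset.smul_sum]
  exact Finset.sum_comm

theorem derivative_charpoly (M : Matrix ι ι R) :
    derivative M.charpoly = ∑ r, (deleteRowCol M r).charpoly := by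
  have derivative_charmatrix_col (j : ι) :
      (fun i => derivative (M.charmatrix i j)) = Pi.single j 1 := by
    ext1 i
    obtain rfl | h := eq_or_ne i j <;> simp [*]
  have deleteRowCol_charmatrix (r : ι) :
      deleteRowCol M.charmatrix r = (deleteRowCol M r).charmatrix := by
    ext1 i j
    simp [charmatrix_apply, diagonal_apply, Subtype.ext_iff]
  simp only [charpoly, derivative_det, derivative_charmatrix_col, det_updateCol_single_one,
    deleteRowCol_charmatrix]

theorem charpoly_fromBlocks_self (A B : Matrix ι ι R) :
    (fromBlocks A B B A).charpoly = (A + B).charpoly * (A - B).charpoly := by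
  let P : (Matrix (ι ⊕ ι) (ι ⊕ ι) R)ˣ :=
    ⟨fromBlocks 1 0 1 1, fromBlocks 1 0 (-1) 1, by simp [fromBlocks_multiply],
      by simp [fromBlocks_multiply]⟩
  have similar : fromBlocks A B B A = P.val * fromBlocks (A + B) B 0 (A - B) * P⁻¹.val := by
    simp [P, Units.inv_mk, fromBlocks_multiply, sub_eq_add_neg]
  rw [similar, coe_units_inv, charpoly_units_conj, charpoly_fromBlocks_zero₂₁]

end Determinants

section Incidence

open Matrix SimpleGraph

variable {V κ : Type*} [DecidableEq V]

/-- The column of the signed incidence matrix that belongs to the edge `e`: it is `1` at one end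
of `e` and `-1` at the other. The orientation is an arbitrary one, since only products of two such
entries of the same column matter in the end. -/
noncomputable def edgeVector (e : Sym2 V) : V → ℤ :=
  Pi.single (Quot.out e).1 1 - Pi.single (Quot.out e).2 1

lemma edgeVector_mk (a b : V) :
    edgeVector s(a, b) = Pi.single a 1 - Pi.single b 1 ∨
      edgeVector s(a, b) = Pi.single b 1 - Pi.single a 1 := by
  have out_eq : s((Quot.out s(a, b)).1, (Quot.out s(a, b)).2) = s(a, b) := Quot.out_eq _
  rcases Sym2.eq_iff.1 out_eq with ⟨ha, hb⟩ | ⟨hb, ha⟩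
  · exact .inl (by rw [edgeVector, ha, hb])
  · exact .inr (by rw [edgeVector, ha, hb])

/-- The signed incidence matrix of a family `f` of edges, without the row of the vertex `r`. -/
noncomputable def reducedIncidence (r : V) (f : κ → Sym2 V) : Matrix {v // v ≠ r} κ ℤ :=
  of fun v i => edgeVector (f i) v

lemma edgeVector_mul_edgeVector {G : SimpleGraph V} [DecidableRel G.Adj] {e : Sym2 V}
    (he : e ∈ G.edgeSet) (u v : V) :
    edgeVector e u * edgeVector e v =
      (if u = v then 1 else -1) * (G.incMatrix ℤ u e * G.incMatrix ℤ v e) := by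
  induction e with | _ a b
  have hab : a ≠ b := G.ne_of_adj he
  simp only [incMatrix_apply', mk'_mem_incidenceSet_iff, (G.mem_edgeSet).1 he, true_and]
  rcases edgeVector_mk a b with h | h <;> simp only [h, Pi.sub_apply, Pi.single_apply] <;> grind

variable [Fintype V]

lemma sum_edgeVector_mul_edgeVector (G : SimpleGraph V) [DecidableRel G.Adj] (u v : V) :
    ∑ e : G.edgeSet, edgeVector e.1 u * edgeVector e.1 v = G.lapMatrix ℤ u v := by
  calc ∑ e : G.edgeSet, edgeVector e.1 u * edgeVector e.1 v
      = (if u = v then 1 else -1) * ∑ e : G.edgeSet, G.incMatrix ℤ u e * G.incMatrix ℤ v e := by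
        rw [Finset.mul_sum]
        exact Finset.sum_congr rfl fun e _ => edgeVector_mul_edgeVector e.2 u v
    _ = (if u = v then 1 else -1) * (G.incMatrix ℤ * (G.incMatrix ℤ)ᵀ) u v := by
        rw [mul_apply, ← Finset.sum_subtype G.edgeFinset (fun _ => mem_edgeFinset)
          fun e => G.incMatrix ℤ u e * G.incMatrix ℤ v e]
        congr 1
        refine Finset.sum_subset (Finset.subset_univ _) fun e _ he => ?_
        rw [G.incMatrix_of_notMem_incidenceSet fun h => he (mem_edgeFinset.2 h.1), zero_mul]
    _ = G.lapMatrix ℤ u v := by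
        rw [incMatrix_mul_transpose]
        obtain rfl | huv := eq_or_ne u v
        · simp [lapMatrix, degMatrix]
        · simp [lapMatrix, degMatrix, huv, adjMatrix_apply, neg_ite]

lemma reducedIncidence_mul_transpose (G : SimpleGraph V) [DecidableRel G.Adj] (r : V) :
    reducedIncidence r (Subtype.val (p := (· ∈ G.edgeSet))) *
        (reducedIncidence r (Subtype.val (p := (· ∈ G.edgeSet))))ᵀ =
      deleteRowCol (G.lapMatrix ℤ) r := by
  ext u v
  exact sum_edgeVector_mul_edgeVector G u v

end Incidence

section Connectivity

open Matrix SimpleGraph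

variable {V κ : Type*} [DecidableEq V]

/-- The graph whose edges are the non-diagonal members of the family `f`. -/
abbrev familyGraph {V κ : Type*} (f : κ → Sym2 V) : SimpleGraph V :=
  fromEdgeSet (Set.range f)

lemma exists_reducedIncidence_mulVec_eq_single [Fintype κ] {r v : V} (f : κ → Sym2 V)
    (hv : (familyGraph f).Reachable v r) :
    ∃ c, reducedIncidence r f *ᵥ c = (Pi.single v 1 : V → ℤ) ∘ (↑) := by
  classical
  obtain ⟨p⟩ := hv
  induction p with
  | nil =>
    refine ⟨0, ?_⟩
    ext w
    simp [w.2]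
  | @cons a b r hab _ ih =>
    obtain ⟨c, hc⟩ := ih
    obtain ⟨⟨i, hi⟩, -⟩ := (fromEdgeSet_adj _).1 hab
    have col_eq : reducedIncidence r f *ᵥ Pi.single i 1 = edgeVector s(a, b) ∘ (↑) := by
      ext w
      simp [reducedIncidence, hi]
    rcases edgeVector_mk a b with h | h
    · refine ⟨c + Pi.single i 1, ?_⟩
      rw [mulVec_add, hc, col_eq, h]
      ext w
      simp
    · refine ⟨c - Pi.single i 1, ?_⟩
      rw [mulVec_sub, hc, col_eq, h]
      ext w
      simp

variable [Fintype V]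

lemma dotProduct_edgeVector_eq_zero {x : V → ℤ} {e : Sym2 V}
    (hx : ∀ a b, e = s(a, b) → x a = x b) : x ⬝ᵥ edgeVector e = 0 := by
  induction e with | _ a b
  rcases edgeVector_mk a b with h | h <;> simp [h, hx a b rfl, dotProduct_sub]

lemma comp_vecMul_reducedIncidence (f : κ → Sym2 V) {r : V} {x : V → ℤ} (hx : x r = 0) :
    x ∘ (↑) ᵥ* reducedIncidence r f = fun i => x ⬝ᵥ edgeVector (f i) := by
  ext i
  rw [dotProduct, Fintype.sum_eq_add_sum_subtype_ne _ r]
  simp [hx, vecMul, dotProduct, reducedIncidence]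

lemma det_reducedIncidence_sq_of_connected {r : V} {f : {v // v ≠ r} → Sym2 V}
    (hf : (familyGraph f).Connected) : (reducedIncidence r f).det ^ 2 = 1 := by
  choose c hc using fun v : {v // v ≠ r} =>
    exists_reducedIncidence_mulVec_eq_single f (hf.preconnected v r)
  have right_inverse : reducedIncidence r f * (of c)ᵀ = 1 := by
    ext w v
    refine (congrFun (hc v) w).trans ?_
    simp [Pi.single_apply, one_apply, Subtype.ext_iff]
  have isUnit_det : IsUnit (reducedIncidence r f).det :=
    .of_mul_eq_one _ ((det_mul _ _).symm.trans (right_inverse ▸ det_one))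
  rw [← sq_abs, Int.isUnit_iff_abs_eq.1 isUnit_det, one_pow]

lemma det_reducedIncidence_of_not_connected {r : V} {f : {v // v ≠ r} → Sym2 V}
    (hf : ¬ (familyGraph f).Connected) : (reducedIncidence r f).det = 0 := by
  classical
  set H := familyGraph f
  obtain ⟨u, hu⟩ : ∃ u, ¬ H.Reachable u r := by
    by_contra! h
    exact hf ((connected_iff H).2 ⟨fun a b => (h a).trans (h b).symm, ⟨r⟩⟩)
  let component : V → ℤ := fun v => if H.Reachable u v then 1 else 0
  have component_dotProduct (i) : component ⬝ᵥ edgeVector (f i) = 0 :=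
    dotProduct_edgeVector_eq_zero fun a b hab => by
      obtain rfl | hne := eq_or_ne a b
      · rfl
      · have adj : H.Adj a b := (fromEdgeSet_adj _).2 ⟨⟨i, hab⟩, hne⟩
        have : H.Reachable u a ↔ H.Reachable u b :=
          ⟨(·.trans adj.reachable), (·.trans adj.symm.reachable)⟩
        simp only [component, this]
  refine exists_vecMul_eq_zero_iff.1 ⟨component ∘ (↑), fun h => ?_, ?_⟩
  · simpa [component] using congrFun h ⟨u, fun hur => hu (hur ▸ .rfl)⟩
  · rw [comp_vecMul_reducedIncidence f (if_neg hu)]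
    exact funext component_dotProduct

end Connectivity

section SpanningTrees

open Matrix SimpleGraph

lemma card_range_eq {ι α : Type*} [Finite ι] {s : Set α} [Finite s]
    (hs : Nat.card ι = Nat.card s) :
    Nat.card {f : ι → α // Set.range f = s} = (Nat.card ι).factorial := by
  let toFamily : (ι ≃ s) → {f : ι → α // Set.range f = s} := fun e => ⟨(↑) ∘ e, by simp⟩
  have injective : toFamily.Injective := fun e e' h =>
    Equiv.ext fun i => Subtype.ext (congrFun (congrArg Subtype.val h) i)
  have surjective : toFamily.Surjective := by
    rintro ⟨f, rfl⟩
    exact ⟨.ofBijective (Set.rangeFactorization f)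
      (Set.rangeFactorization_surjective.bijective_of_nat_card_le hs.le), rfl⟩
  obtain ⟨e₀⟩ := Finite.card_eq.1 hs
  calc Nat.card {f : ι → α // Set.range f = s}
      = Nat.card (ι ≃ s) := (Nat.card_eq_of_bijective toFamily ⟨injective, surjective⟩).symm
    _ = Nat.card (Equiv.Perm ι) := Nat.card_congr (Equiv.equivCongr (Equiv.refl ι) e₀.symm)
    _ = (Nat.card ι).factorial := Nat.card_perm

variable {V ι : Type*}

lemma numSpanningTrees_eq_card (G : SimpleGraph V) :
    numSpanningTrees G = Nat.card {T : SimpleGraph V // T ≤ G ∧ T.IsTree} :=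
  Nat.card_congr
    { toFun H := ⟨H.1.spanningCoe, H.1.spanningCoe_le,
        (H.1.spanningCoeEquivCoeOfSpanning H.2.1).isTree_iff.2 H.2.2⟩
      invFun T :=
        have spanning := toSubgraph.isSpanning T.1 T.2.1
        ⟨toSubgraph T.1 T.2.1, spanning,
          (Subgraph.spanningCoeEquivCoeOfSpanning _ spanning).isTree_iff.1 T.2.2⟩
      left_inv H := by
        ext u v
        · simp [H.2.1 u]
        · simp
      right_inv T := by
        ext u v
        simp }

lemma edgeSet_familyGraph_val {G : SimpleGraph V} (f : ι → G.edgeSet) :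
    (familyGraph (Subtype.val ∘ f)).edgeSet = Set.range (Subtype.val ∘ f) := by
  rw [edgeSet_fromEdgeSet, sdiff_eq_left, Set.disjoint_left]
  rintro _ ⟨i, rfl⟩
  exact G.not_isDiag_of_mem_edgeSet (f i).2

variable [Finite V] [Finite ι]

lemma isTree_familyGraph (hι : Nat.card ι + 1 = Nat.card V) {f : ι → Sym2 V}
    (hf : (familyGraph f).Connected) : (familyGraph f).IsTree := by
  refine isTree_iff_connected_and_card.2 ⟨hf, hf.card_vert_le_card_edgeSet_add_one.antisymm' ?_⟩
  calc Nat.card (familyGraph f).edgeSet + 1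
      ≤ Nat.card (Set.range f) + 1 := by
        gcongr
        rw [edgeSet_fromEdgeSet]
        exact Nat.card_mono (Set.toFinite _) Set.sdiff_subset
    _ ≤ Nat.card ι + 1 := by
        gcongr
        exact Finite.card_range_le f
    _ = Nat.card V := hι

lemma card_connected_families (hι : Nat.card ι + 1 = Nat.card V) (G : SimpleGraph V) :
    Nat.card {f : ι → G.edgeSet // (familyGraph (Subtype.val ∘ f)).Connected} =
      (Nat.card ι).factorial * numSpanningTrees G := by
  have familyGraph_val_le (f : ι → G.edgeSet) :
      familyGraph (Subtype.val ∘ f) ≤ G := by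
    rw [← edgeSet_subset_edgeSet, edgeSet_familyGraph_val]
    exact Set.range_subset_iff.2 fun i => (f i).2
  have card_edgeSet (T : SimpleGraph V) (hT : T.IsTree) : Nat.card ι = Nat.card T.edgeSet :=
    Nat.add_right_cancel (hι.trans (isTree_iff_connected_and_card.1 hT).2.symm)
  let e : {f : ι → G.edgeSet // (familyGraph (Subtype.val ∘ f)).Connected} ≃
      Σ T : {T : SimpleGraph V // T ≤ G ∧ T.IsTree},
        {f : ι → Sym2 V // Set.range f = T.1.edgeSet} :=
    { toFun f := ⟨⟨_, familyGraph_val_le f.1, isTree_familyGraph hι f.2⟩,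
        Subtype.val ∘ f.1, (edgeSet_familyGraph_val f.1).symm⟩
      invFun x := ⟨fun i => ⟨x.2.1 i, edgeSet_mono x.1.2.1 (x.2.2.le ⟨i, rfl⟩)⟩, by
          change (fromEdgeSet (Set.range x.2.1)).Connected
          rw [x.2.2, fromEdgeSet_edgeSet]
          exact x.1.2.2.connected⟩
      left_inv f := rfl
      right_inv := by
        rintro ⟨⟨T, hTG, hT⟩, f, hf⟩
        obtain rfl : familyGraph f = T := by rw [familyGraph, hf, fromEdgeSet_edgeSet]
        rfl }
  have := Fintype.ofFinite {T : SimpleGraph V // T ≤ G ∧ T.IsTree}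
  rw [Nat.card_congr e, Nat.card_sigma, numSpanningTrees_eq_card,
    Finset.sum_congr rfl fun T _ => card_range_eq (card_edgeSet T.1 T.2.2)]
  simp [mul_comm]

end SpanningTrees

section MatrixTree

open Matrix Polynomial SimpleGraph

variable {V : Type*} [Fintype V] [DecidableEq V]

/-- Kirchhoff's **matrix-tree theorem**. -/
theorem numSpanningTrees_eq_det (G : SimpleGraph V) [DecidableRel G.Adj] (r : V) :
    (numSpanningTrees G : ℤ) = (deleteRowCol (G.lapMatrix ℤ) r).det := by
  classical
  have card_ne : Nat.card {v // v ≠ r} + 1 = Nat.card V := by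
    simpa using Nat.sub_add_cancel (Fintype.card_pos_iff.2 ⟨r⟩)
  have det_sq (f : {v // v ≠ r} → G.edgeSet) :
      (reducedIncidence r (Subtype.val ∘ f)).det ^ 2 =
        if (familyGraph (Subtype.val ∘ f)).Connected then 1 else 0 := by
    split_ifs with h
    · exact det_reducedIncidence_sq_of_connected h
    · rw [det_reducedIncidence_of_not_connected h, zero_pow two_ne_zero]
  have factorial_ne_zero : ((Fintype.card {v // v ≠ r}).factorial : ℤ) ≠ 0 :=
    Nat.cast_ne_zero.2 (Nat.factorial_ne_zero _)
  refine mul_left_cancel₀ factorial_ne_zero (Eq.symm ?_)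
  calc ((Fintype.card {v // v ≠ r}).factorial : ℤ) * (deleteRowCol (G.lapMatrix ℤ) r).det
      = ∑ f : {v // v ≠ r} → G.edgeSet, (reducedIncidence r (Subtype.val ∘ f)).det ^ 2 := by
        rw [← reducedIncidence_mul_transpose, factorial_mul_det_mul]
        refine Finset.sum_congr rfl fun f _ => ?_
        rw [sq, ← transpose_submatrix, det_transpose]
        rfl
    _ = (Fintype.card {v // v ≠ r}).factorial * numSpanningTrees G := by
        simp only [det_sq, Finset.sum_boole, ← Fintype.card_subtype]
        rw [← Nat.card_eq_fintype_card, card_connected_families card_ne]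
        simp

theorem eval_derivative_charpoly_adjMatrix {G : SimpleGraph V} [DecidableRel G.Adj] {k : ℕ}
    (hG : G.IsRegularOfDegree k) :
    (derivative (G.adjMatrix ℤ).charpoly).eval (k : ℤ) =
      Fintype.card V * numSpanningTrees G := by
  have lapMatrix_eq : G.lapMatrix ℤ = (diagonal fun _ => (k : ℤ)) - G.adjMatrix ℤ := by
    simp only [lapMatrix, degMatrix, hG.degree_eq]
  calc (derivative (G.adjMatrix ℤ).charpoly).eval (k : ℤ)
      = ∑ r, (deleteRowCol (G.lapMatrix ℤ) r).det := by
        rw [derivative_charpoly, eval_finsetSum]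
        refine Finset.sum_congr rfl fun r _ => ?_
        rw [eval_charpoly, lapMatrix_eq, scalar_apply]
        congr 1
        ext u v
        simp [diagonal_apply, Subtype.ext_iff]
    _ = Fintype.card V * numSpanningTrees G := by simp [← numSpanningTrees_eq_det]

end MatrixTree

section Chebyshev

open Polynomial

lemma exists_add_inv_eq {K : Type*} [Field K] [IsAlgClosed K] (y : K) : ∃ q ≠ 0, q + q⁻¹ = y := by
  obtain ⟨q, hq⟩ := IsAlgClosed.exists_root (C 1 * X ^ 2 + C (-y) * X + C 1 : K[X])
    (by rw [degree_quadratic one_ne_zero]; decide)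
  have hq : q * (y - q) = 1 := by
    simp only [IsRoot, eval_add, eval_mul, eval_pow, eval_C, eval_X] at hq
    linear_combination -hq
  exact ⟨q, left_ne_zero_of_mul_eq_one hq, by rw [inv_eq_of_mul_eq_one_right hq, add_sub_cancel]⟩

lemma C_eval_add_inv (n : ℕ) {K : Type*} [Field K] {q : K} (hq : q ≠ 0) :
    (Chebyshev.C K n).eval (q + q⁻¹) = q ^ n + (q ^ n)⁻¹ := by
  rw [← dickson_one_one_eq_chebyshev_C, dickson_one_one_eval_add_inv _ _ (mul_inv_cancel₀ hq),
    inv_pow]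

variable (R : Type*) [CommRing R]

lemma C_eval_two_mul (n : ℤ) (x : R) :
    (Chebyshev.C R n).eval (2 * x) = 2 * (Chebyshev.T R n).eval x := by
  simpa using congrArg (eval x) (C_comp_two_mul_X R n)

lemma derivative_C_eval_two (n : ℤ) : (derivative (Chebyshev.C R n)).eval 2 = n ^ 2 := by
  have over_int : (derivative (Chebyshev.C ℤ n)).eval 2 = n ^ 2 := by
    simpa [derivative_comp, derivative_T_eval_one] using
      congrArg (fun p => (derivative p).eval 1) (C_comp_two_mul_X ℤ n)
  rw [← Chebyshev.map_C (Int.castRingHom R), derivative_map, ← map_ofNat (Int.castRingHom R) 2,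
    eval_map_apply, over_int]
  simp

end Chebyshev

section CyclicShift

open Matrix Polynomial

variable (R : Type*) [CommRing R] (n : ℕ)

/-- The permutation matrix of the cyclic shift `i ↦ i + 1` of `ZMod n`. -/
def cyclicShift : Matrix (ZMod n) (ZMod n) R :=
  (Equiv.addRight (1 : ZMod n)).permMatrix R

lemma cyclicShift_apply (i j : ZMod n) : cyclicShift R n i j = if i + 1 = j then 1 else 0 := by
  simp [cyclicShift, PEquiv.toMatrix_apply, eq_comm]

variable {R} in
lemma map_cyclicShift {A : Type*} [CommRing A] (f : R →+* A) :
    (cyclicShift R n).map f = cyclicShift A n := by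
  ext i j
  simp [cyclicShift_apply, apply_ite f]

variable [NeZero n]

lemma cyclicShift_mul_transpose : cyclicShift R n * (cyclicShift R n)ᵀ = 1 := by
  rw [cyclicShift, transpose_permMatrix, ← permMatrix_mul, inv_mul_cancel, permMatrix_one]

lemma cyclicShift_pow_apply (k : ℕ) (i j : ZMod n) :
    (cyclicShift R n ^ k) i j = if i + k = j then 1 else 0 := by
  induction k generalizing i with
  | zero => simp [one_apply]
  | succ k ih =>
    calc (cyclicShift R n ^ (k + 1)) i j
        = (cyclicShift R n ^ k) (i + 1) j := by simp [pow_succ', mul_apply, cyclicShift_apply]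
      _ = if i + (k + 1 : ℕ) = j then 1 else 0 := by
          rw [ih, Nat.cast_succ, add_assoc, add_comm 1]

variable {R} in
lemma aeval_cyclicShift_apply {p : R[X]} {k : ℕ} (hp : p.natDegree < n) (hk : k < n) :
    aeval (cyclicShift R n) p 0 (k : ZMod n) = p.coeff k := by
  have natCast_inj (l : ℕ) (hl : l ∈ Finset.range n) : (l : ZMod n) = k ↔ l = k := by
    rw [ZMod.natCast_eq_natCast_iff', Nat.mod_eq_of_lt hk, Nat.mod_eq_of_lt (Finset.mem_range.1 hl)]
  rw [aeval_eq_sum_range' hp, Matrix.sum_apply,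
    Finset.sum_eq_single_of_mem k (Finset.mem_range.2 hk)]
  · simp [cyclicShift_pow_apply]
  · intro l hl hlk
    simp [cyclicShift_pow_apply, natCast_inj l hl, hlk]

variable {R} in
lemma eq_zero_of_aeval_cyclicShift_eq_zero {p : R[X]} (hp : p.natDegree < n)
    (h : aeval (cyclicShift R n) p = 0) : p = 0 := by
  ext k
  obtain hk | hk := lt_or_ge k n
  · rw [← aeval_cyclicShift_apply n hp hk, h, Matrix.zero_apply, coeff_zero]
  · exact coeff_eq_zero_of_natDegree_lt (hp.trans_le hk)

theorem charpoly_cyclicShift : (cyclicShift R n).charpoly = X ^ n - 1 := by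
  nontriviality R
  have monic_charpoly : IsMonicOfDegree (cyclicShift R n).charpoly n :=
    ⟨by rw [charpoly_natDegree_eq_dim, ZMod.card], charpoly_monic _⟩
  have monic_X_pow_sub_one : IsMonicOfDegree (X ^ n - 1 : R[X]) n :=
    ⟨natDegree_X_pow_sub_C (r := 1), monic_X_pow_sub_C 1 (NeZero.ne n)⟩
  have cyclicShift_pow_self : cyclicShift R n ^ n = 1 := by
    ext i j
    simp [cyclicShift_pow_apply, one_apply]
  refine sub_eq_zero.1 (eq_zero_of_aeval_cyclicShift_eq_zero n ?_ ?_)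
  · exact monic_charpoly.natDegree_sub_lt (NeZero.ne n) monic_X_pow_sub_one
  · simp [aeval_self_charpoly, cyclicShift_pow_self]

lemma eval_charpoly_cyclicShift_add_transpose {K : Type*} [Field K] {q : K} (hq : q ≠ 0) :
    (cyclicShift K n + (cyclicShift K n)ᵀ).charpoly.eval (q + q⁻¹) = q ^ n + (q ^ n)⁻¹ - 2 := by
  set S := cyclicShift K n
  have factorization : scalar (ZMod n) (q + q⁻¹) - (S + Sᵀ) =
      q⁻¹ • ((scalar (ZMod n) q - S) * (scalar (ZMod n) q - S)ᵀ) := by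
    have scalar_eq (x : K) : scalar (ZMod n) x = x • 1 := by
      rw [smul_one_eq_diagonal, scalar_apply]
    rw [transpose_sub, sub_mul, mul_sub, mul_sub, cyclicShift_mul_transpose]
    simp only [scalar_eq, transpose_smul, transpose_one, smul_mul_assoc, mul_smul_comm, one_mul,
      mul_one]
    match_scalars <;> grind
  have det_eq : (scalar (ZMod n) q - S).det = q ^ n - 1 := by
    rw [← eval_charpoly, charpoly_cyclicShift]
    simp
  rw [eval_charpoly, factorization, det_smul, det_mul, det_transpose, det_eq, ZMod.card, inv_pow]
  field_simp
  ring

variable {R} in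
lemma map_charpoly_cyclicShift_add_transpose {A : Type*} [CommRing A] (f : R →+* A) :
    (cyclicShift R n + (cyclicShift R n)ᵀ).charpoly.map f =
      (cyclicShift A n + (cyclicShift A n)ᵀ).charpoly := by
  rw [← charpoly_map, ← map_cyclicShift n f, Matrix.map_add _ (map_add f), transpose_map]

theorem charpoly_cyclicShift_add_transpose :
    (cyclicShift R n + (cyclicShift R n)ᵀ).charpoly = Chebyshev.C R n - 2 := by
  have charpoly_complex :
      (cyclicShift ℂ n + (cyclicShift ℂ n)ᵀ).charpoly = Chebyshev.C ℂ n - 2 := by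
    refine Polynomial.funext fun y => ?_
    obtain ⟨q, hq, rfl⟩ := exists_add_inv_eq y
    simp [eval_charpoly_cyclicShift_add_transpose n hq, C_eval_add_inv n hq]
  have charpoly_int : (cyclicShift ℤ n + (cyclicShift ℤ n)ᵀ).charpoly = Chebyshev.C ℤ n - 2 := by
    apply map_injective (Int.castRingHom ℂ) Int.cast_injective
    rw [map_charpoly_cyclicShift_add_transpose, charpoly_complex]
    simp
  rw [← map_charpoly_cyclicShift_add_transpose n (Int.castRingHom R), charpoly_int]
  simp

end CyclicShift

section Cayley

variable {G : Type*} [Group G]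

lemma cayleyGraph_adj {S : Set G} (inv_mem : ∀ s ∈ S, s⁻¹ ∈ S) (one_notMem : 1 ∉ S) {x y : G} :
    (cayleyGraph S).Adj x y ↔ x⁻¹ * y ∈ S := by
  have swap : y⁻¹ * x ∈ S → x⁻¹ * y ∈ S := fun h => by simpa using inv_mem _ h
  have ne : x⁻¹ * y ∈ S → x ≠ y := by
    rintro h rfl
    exact one_notMem (inv_mul_cancel x ▸ h)
  rw [cayleyGraph, SimpleGraph.fromRel_adj]
  tauto

lemma isRegularOfDegree_cayleyGraph {S : Set G} (inv_mem : ∀ s ∈ S, s⁻¹ ∈ S) (one_notMem : 1 ∉ S)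
    [(cayleyGraph S).LocallyFinite] : (cayleyGraph S).IsRegularOfDegree S.ncard := by
  intro x
  have neighborSet_eq : (cayleyGraph S).neighborSet x = (x * ·) '' S := by
    ext y
    simp [cayleyGraph_adj inv_mem one_notMem]
  rw [← SimpleGraph.card_neighborSet_eq_degree, ← Nat.card_eq_fintype_card, Nat.card_coe_set_eq,
    neighborSet_eq, Set.ncard_image_of_injective _ (mul_right_injective x)]

end Cayley

section Prism

open Matrix Polynomial

variable (n : ℕ)

/-- The connection set `{b, b⁻¹, a}` of the prism graph, where `b` is the rotation `r 1` and `a` is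
the reflection `sr 0`. -/
def prismGenerators : Set (DihedralGroup n) :=
  {r 1, r (-1), sr 0}

variable {n}

lemma inv_mem_prismGenerators : ∀ s ∈ prismGenerators n, s⁻¹ ∈ prismGenerators n := by
  simp [prismGenerators]

lemma one_notMem_prismGenerators [Nontrivial (ZMod n)] : 1 ∉ prismGenerators n := by
  simp [prismGenerators, one_def, -r_zero]

lemma ncard_prismGenerators (two_ne_zero : (2 : ZMod n) ≠ 0) : (prismGenerators n).ncard = 3 := by
  have one_ne_neg_one : (1 : ZMod n) ≠ -1 := fun h => two_ne_zero (by linear_combination h)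
  exact Set.ncard_eq_three.2
    ⟨r 1, r (-1), sr 0, by simpa using one_ne_neg_one, by simp, by simp, rfl⟩

lemma isRegularOfDegree_prismGraph (two_ne_zero : (2 : ZMod n) ≠ 0) [(prismGraph n).LocallyFinite] :
    (prismGraph n).IsRegularOfDegree 3 := by
  have : Nontrivial (ZMod n) := nontrivial_of_ne _ _ two_ne_zero
  let _ : (cayleyGraph (prismGenerators n)).LocallyFinite :=
    inferInstanceAs (prismGraph n).LocallyFinite
  rw [← ncard_prismGenerators two_ne_zero]
  exact isRegularOfDegree_cayleyGraph inv_mem_prismGenerators one_notMem_prismGenerators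

lemma prismGraph_adj [Nontrivial (ZMod n)] {x y : DihedralGroup n} :
    (prismGraph n).Adj x y ↔ x⁻¹ * y ∈ prismGenerators n :=
  cayleyGraph_adj inv_mem_prismGenerators one_notMem_prismGenerators

lemma prismGraph_adj_r_r [Nontrivial (ZMod n)] (i j : ZMod n) :
    (prismGraph n).Adj (r i) (r j) ↔ i + 1 = j ∨ j + 1 = i := by
  simp only [prismGraph_adj, prismGenerators, inv_r, r_mul_r, Set.mem_insert_iff, r.injEq,
    Set.mem_singleton_iff, reduceCtorEq, or_false]
  grind

lemma prismGraph_adj_r_sr [Nontrivial (ZMod n)] (i j : ZMod n) :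
    (prismGraph n).Adj (r i) (sr j) ↔ i = -j := by
  simp only [prismGraph_adj, prismGenerators, inv_r, r_mul_sr, sub_neg_eq_add, Set.mem_insert_iff,
    reduceCtorEq, Set.mem_singleton_iff, sr.injEq, false_or]
  grind

lemma prismGraph_adj_sr_sr [Nontrivial (ZMod n)] (i j : ZMod n) :
    (prismGraph n).Adj (sr i) (sr j) ↔ i + 1 = j ∨ j + 1 = i := by
  simp only [prismGraph_adj, prismGenerators, inv_sr, sr_mul_sr, Set.mem_insert_iff, r.injEq,
    Set.mem_singleton_iff, reduceCtorEq, or_false]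
  grind

variable (n) in
/-- The vertices of the prism as two copies of the cycle `ZMod n`. The index of a reflection is
negated because `r i` is joined to `sr (-i)`. -/
def dihedralEquivSum : DihedralGroup n ≃ ZMod n ⊕ ZMod n where
  toFun
    | r i => .inl i
    | sr i => .inr (-i)
  invFun
    | .inl i => r i
    | .inr i => sr (-i)
  left_inv := by rintro (i | i) <;> simp
  right_inv := by rintro (i | i) <;> simp

variable [DecidableRel (prismGraph n).Adj] (R : Type*) [CommRing R]

lemma reindex_adjMatrix_prismGraph (two_ne_zero : (2 : ZMod n) ≠ 0) :
    ((prismGraph n).adjMatrix R).reindex (dihedralEquivSum n) (dihedralEquivSum n) =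
      fromBlocks (cyclicShift R n + (cyclicShift R n)ᵀ) 1 1
        (cyclicShift R n + (cyclicShift R n)ᵀ) := by
  have : Nontrivial (ZMod n) := nontrivial_of_ne _ _ two_ne_zero
  have ite_or (i j : ZMod n) : (if i + 1 = j ∨ j + 1 = i then (1 : R) else 0) =
      (if i + 1 = j then 1 else 0) + if j + 1 = i then 1 else 0 := by
    have not_both : ¬ (i + 1 = j ∧ j + 1 = i) := fun ⟨hij, hji⟩ =>
      two_ne_zero (by linear_combination hij + hji)
    grind
  ext (i | i) (j | j)
  · simp [dihedralEquivSum, prismGraph_adj_r_r, cyclicShift_apply, ite_or]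
  · simp [dihedralEquivSum, prismGraph_adj_r_sr, one_apply]
  · simp [dihedralEquivSum, SimpleGraph.adj_comm _ (sr _), prismGraph_adj_r_sr, one_apply, eq_comm]
  · have neg_add_one_eq_neg (i j : ZMod n) : -i + 1 = -j ↔ j + 1 = i := by grind
    simp [dihedralEquivSum, prismGraph_adj_sr_sr, cyclicShift_apply, neg_add_one_eq_neg, ite_or,
      add_comm]

theorem charpoly_adjMatrix_prismGraph [NeZero n] (two_ne_zero : (2 : ZMod n) ≠ 0) :
    ((prismGraph n).adjMatrix R).charpoly =
      (Chebyshev.C R n - 2).comp (X - 1) * (Chebyshev.C R n - 2).comp (X + 1) := by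
  set A := cyclicShift R n + (cyclicShift R n)ᵀ with hA
  have charpoly_sub_scalar (μ : R) :
      (A - scalar _ μ).charpoly = (Chebyshev.C R n - 2).comp (X + Polynomial.C μ) := by
    rw [Matrix.charpoly_sub_scalar, hA, charpoly_cyclicShift_add_transpose]
  calc ((prismGraph n).adjMatrix R).charpoly
      = (A + 1).charpoly * (A - 1).charpoly := by
        rw [← charpoly_reindex (dihedralEquivSum n), reindex_adjMatrix_prismGraph R two_ne_zero,
          charpoly_fromBlocks_self]
    _ = (A - scalar _ (-1)).charpoly * (A - scalar _ 1).charpoly := by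
        rw [map_neg, map_one, sub_neg_eq_add]
    _ = _ := by
        rw [charpoly_sub_scalar, charpoly_sub_scalar, Polynomial.C_neg, Polynomial.C_1,
          ← sub_eq_add_neg]

end Prism

theorem stmt18 (n : ℕ) (hn : 3 ≤ n) :
    (numSpanningTrees (prismGraph n) : ℤ) = n * ((T ℤ n).eval 2 - 1) := by
  classical
  have : NeZero n := ⟨by omega⟩
  have two_ne_zero : (2 : ZMod n) ≠ 0 := fun h =>
    Nat.not_le_of_lt hn (Nat.le_of_dvd two_pos ((ZMod.natCast_eq_zero_iff 2 n).1 h))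
  have C_eval_four : (C ℤ n).eval 4 = 2 * (T ℤ n).eval 2 := C_eval_two_mul ℤ n 2
  refine mul_left_cancel₀ (NeZero.ne (2 * n : ℤ)) ?_
  calc (2 * n : ℤ) * numSpanningTrees (prismGraph n)
      = (Polynomial.derivative ((prismGraph n).adjMatrix ℤ).charpoly).eval 3 := by
        have := eval_derivative_charpoly_adjMatrix (isRegularOfDegree_prismGraph two_ne_zero)
        rw [DihedralGroup.card] at this
        exact_mod_cast this.symm
    _ = (Polynomial.derivative (C ℤ n)).eval 2 * ((C ℤ n).eval 4 - 2) := by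
        rw [charpoly_adjMatrix_prismGraph ℤ two_ne_zero]
        simp [Polynomial.derivative_comp]
    _ = 2 * n * (n * ((T ℤ n).eval 2 - 1)) := by
        rw [derivative_C_eval_two, C_eval_four]
        push_cast
        ring
end
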